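/- arXiv:1310.7059 — 5 statements merged into one kernel-verified Lean document; each statement's English description precedes it below -/
import Mathlib

section
/- Fix integers n ≥ 1 and 0 ≤ k ≤ n. The total number of Condensed Catalan tableaux of size (k,n) (over all shapes λ contained in the k × (n−k) rectangle) equals the Narayana number (1/(n+1))·binom(n+1, k)·binom(n+1, k+1); equivalently, (n+1) times this number of tableaux equals binom(n+1, k)·binom(n+1, k+1). -/
open scoped Classical
open Finset

/-- A Condensed Catalan tableau with `k` rows inside a rectangle of width `w`,
of shape `lam`: cells are `none` (empty), `some true` (an α) or `some false` (a β). -/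
def IsCCT (k w : ℕ) (lam : Fin k → ℕ) (F : Fin k → Fin w → Option Bool) : Prop :=
  (∀ (i : Fin k) (c : Fin w), lam i ≤ (c : ℕ) → F i c = none) ∧
  (∀ (i : Fin k) (c c' : Fin w), F i c = some false → c' < c → F i c' = none) ∧
  (∀ (i i' : Fin k) (c : Fin w), F i c = some true → i' < i → F i' c = none) ∧
  (∀ (i : Fin k) (c : Fin w), (c : ℕ) < lam i →
    (∀ i' : Fin k, i < i' → F i' c ≠ some true) →
    (∀ c' : Fin w, c < c' → (c' : ℕ) < lam i → F i c' ≠ some false) →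
    F i c ≠ none)

/-- The number of α's in the filling. -/
def aCount (k w : ℕ) (F : Fin k → Fin w → Option Bool) : ℕ :=
  (Finset.univ.filter fun p : Fin k × Fin w => F p.1 p.2 = some true).card

/-- The number of β's in the filling. -/
def bCount (k w : ℕ) (F : Fin k → Fin w → Option Bool) : ℕ :=
  (Finset.univ.filter fun p : Fin k × Fin w => F p.1 p.2 = some false).card

/-- The binomial coefficient `binom a b` for integer arguments, with the convention
that it vanishes whenever `b < 0` or `b > a`. -/
def icho (a b : ℤ) : ℤ := if 0 ≤ b ∧ b ≤ a then ((a.toNat).choose b.toNat : ℤ) else 0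

def GoodT (k w : ℕ) (p : (Fin k → Fin (w + 1)) × (Fin k → Fin w → Option Bool)) : Prop :=
  (∀ i j : Fin k, i ≤ j → (p.1 j : ℕ) ≤ (p.1 i : ℕ)) ∧ IsCCT k w (fun i => (p.1 i : ℕ)) p.2

noncomputable def fr {k w : ℕ} (F : Fin k → Fin w → Option Bool) : Finset (Fin k) :=
  Finset.univ.filter fun i => ∀ c, F i c ≠ some false

noncomputable def Tn (k w f : ℕ) : ℕ :=
  (Finset.univ.filter fun p : (Fin k → Fin (w + 1)) × (Fin k → Fin w → Option Bool) =>
    GoodT k w p ∧ (fr p.2).card = f).card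

noncomputable def Sn (k w f : ℕ) : ℕ :=
  (Finset.univ.filter fun p : (Fin k → Fin (w + 1)) × (Fin k → Fin w → Option Bool) =>
    GoodT k w p ∧ f ≤ (fr p.2).card).card

theorem Sn_succ (k w f : ℕ) : Sn k w f = Tn k w f + Sn k w (f + 1) := by
  unfold Sn Tn
  rw [← Finset.card_union_of_disjoint]
  · congr 1
    ext p
    simp only [mem_filter, mem_univ, true_and, mem_union]
    constructor
    · rintro ⟨h, h2⟩
      rcases Nat.eq_or_lt_of_le h2 with h3 | h3
      · exact Or.inl ⟨h, h3.symm⟩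
      · exact Or.inr ⟨h, h3⟩
    · rintro (⟨h, h2⟩ | ⟨h, h2⟩)
      · exact ⟨h, by omega⟩
      · exact ⟨h, by omega⟩
  · rw [Finset.disjoint_left]
    intro p
    simp only [mem_filter, mem_univ, true_and]
    rintro ⟨h, h2⟩ ⟨h3, h4⟩
    omega

theorem Sn_big (k w f : ℕ) (h : k < f) : Sn k w f = 0 := by
  unfold Sn
  rw [Finset.card_eq_zero, Finset.filter_eq_empty_iff]
  rintro p - ⟨h1, h2⟩
  have := Finset.card_le_univ (fr p.2)
  simp at this
  omega

def ColOK {k : ℕ} (R : Finset (Fin k)) (col : Fin k → Option Bool) : Prop :=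
  (∀ i, i ∉ R → col i = none) ∧
  (∀ i i', col i = some true → i' < i → col i' = none) ∧
  (∀ i ∈ R, (∀ i', i < i' → col i' ≠ some true) → col i ≠ none)

theorem cct_cons {k w : ℕ} (lam : Fin k → ℕ) (F : Fin k → Fin (w + 1) → Option Bool)
    (hl : ∀ i, 0 < lam i) :
    IsCCT k (w + 1) lam F ↔
      IsCCT k w (fun i => lam i - 1) (fun i c => F i c.succ) ∧
        ColOK (fr fun i (c : Fin w) => F i c.succ) (fun i => F i 0) := by
  have key : ∀ (i : Fin k) (c : ℕ), (lam i - 1 ≤ c ↔ lam i ≤ c + 1) := by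
    intro i c; have := hl i; omega
  have key2 : ∀ (i : Fin k) (c : ℕ), (c < lam i - 1 ↔ c + 1 < lam i) := by
    intro i c; have := hl i; omega
  have e0 : ∀ i, (lam i ≤ 0 ↔ False) := by intro i; simpa using (hl i).ne'
  have key3 : ∀ (i : Fin k), (0 < lam i ↔ True) := by
    intro i; simpa using hl i
  unfold IsCCT ColOK fr
  simp only [Fin.forall_fin_succ (n := w), mem_filter, mem_univ, true_and, Fin.val_zero, Fin.val_succ,
    Fin.succ_lt_succ_iff, Fin.succ_pos, Fin.not_lt_zero, key, key2, key3, e0, lt_self_iff_false,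
    false_imp_iff, imp_true_iff, and_true, forall_const, not_forall, not_not]
  constructor
  · rintro ⟨h1, h2, h3, h4⟩
    refine ⟨⟨fun i c hc => h1 i c hc, fun i c c' h hc => (h2 i c).2 c' h hc,
      fun i i' c => (h3 i i').2 c, fun i c => (h4 i).2 c⟩, ?_, fun i i' => (h3 i i').1, ?_⟩
    · rintro i ⟨x, hx⟩
      exact (h2 i x).1 hx
    · intro i h h'
      exact (h4 i).1 h' fun c _ => h c
  · rintro ⟨⟨h1, h2, h3, h4⟩, h5, h6, h7⟩
    refine ⟨h1, fun i c => ⟨fun h => h5 i ⟨c, h⟩, h2 i c⟩,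
      fun i i' => ⟨h6 i i', h3 i i'⟩, fun i => ⟨fun h h' => h7 i (fun c => ?_) h, h4 i⟩⟩
    by_cases hc : (c : ℕ) + 1 < lam i
    · exact h' c hc
    · rw [h1 i c (by omega)]
      simp

theorem fr_cons {k w : ℕ} (F : Fin k → Fin (w + 1) → Option Bool) :
    fr F = (fr fun i (c : Fin w) => F i c.succ).filter fun i => F i 0 ≠ some false := by
  ext i
  simp only [fr, mem_filter, mem_univ, true_and, Fin.forall_fin_succ (n := w)]
  tauto

theorem cct_snoc {k w : ℕ} (lam : Fin (k + 1) → ℕ) (F : Fin (k + 1) → Fin w → Option Bool)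
    (hl : lam (Fin.last k) = 0) :
    IsCCT (k + 1) w lam F ↔
      IsCCT k w (fun i => lam i.castSucc) (fun i c => F i.castSucc c) ∧
        ∀ c, F (Fin.last k) c = none := by
  have a1 : ∀ i : Fin k, i.castSucc < Fin.last k := fun i => Fin.castSucc_lt_last i
  have a2 : ∀ i : Fin k, ¬ (Fin.last k < i.castSucc) := fun i => (a1 i).le.not_gt
  unfold IsCCT
  simp only [Fin.forall_fin_succ' (n := k), hl, Nat.zero_le, a1, a2, Fin.castSucc_lt_castSucc_iff,
    lt_self_iff_false, Nat.not_lt_zero, false_imp_iff, imp_true_iff, and_true, forall_const]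
  constructor
  · rintro ⟨⟨h1, h1'⟩, ⟨h2, h2'⟩, ⟨h3, h3'⟩, h4⟩
    refine ⟨⟨h1, h2, h3, fun i c h h' h'' => h4 i c h ⟨h', ?_⟩ h''⟩, h1'⟩
    rw [h1']; simp
  · rintro ⟨⟨h1, h2, h3, h4⟩, h5⟩
    refine ⟨⟨h1, h5⟩, ⟨h2, ?_⟩, ⟨h3, ?_⟩, fun i c h h' h'' => h4 i c h h'.1 h''⟩
    · intros; simp [h5]
    · intro i c h; simp [h5] at h

theorem fr_snoc {k w : ℕ} (F : Fin (k + 1) → Fin w → Option Bool)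
    (h : ∀ c, F (Fin.last k) c = none) :
    (fr F).card = (fr fun i c => F (Fin.castSucc i) c).card + 1 := by
  unfold fr
  rw [Finset.card_filter, Finset.card_filter, Fin.sum_univ_castSucc]
  simp [h]

theorem lower_exists {k : ℕ} (R : Finset (Fin k)) : ∀ f, f ≤ R.card →
    ∃ A ⊆ R, A.card = f ∧ ∀ i ∈ A, ∀ j ∈ R, j < i → j ∈ A := by
  induction R using Finset.induction_on_max with
  | empty => intro f hf; exact ⟨∅, by simp, by simp at hf; simp [hf], by simp⟩
  | insert m R hm ih =>
    intro f hf
    have hmR : m ∉ R := fun h => lt_irrefl _ (hm m h)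
    rw [Finset.card_insert_of_notMem hmR] at hf
    rcases Nat.lt_or_ge R.card f with h | h
    · exact ⟨insert m R, subset_rfl, by rw [Finset.card_insert_of_notMem hmR]; omega,
        fun i _ j hj _ => hj⟩
    · obtain ⟨A, hA, hc, hl⟩ := ih f h
      refine ⟨A, hA.trans (Finset.subset_insert _ _), hc, fun i hi j hj hji => ?_⟩
      rcases Finset.mem_insert.1 hj with rfl | hj
      · exact absurd (hm i (hA hi)) hji.le.not_gt
      · exact hl i hi j hj hji

theorem lower_unique {k : ℕ} (R A B : Finset (Fin k)) (hA : A ⊆ R) (hB : B ⊆ R)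
    (hc : A.card = B.card) (lA : ∀ i ∈ A, ∀ j ∈ R, j < i → j ∈ A)
    (lB : ∀ i ∈ B, ∀ j ∈ R, j < i → j ∈ B) : A = B := by
  by_cases h : A ⊆ B
  · exact Finset.eq_of_subset_of_card_le h hc.ge
  · obtain ⟨a, ha, hb⟩ := Finset.not_subset.1 h
    refine (Finset.eq_of_subset_of_card_le (fun b hbB => ?_) hc.le).symm
    rcases lt_trichotomy a b with h1 | h1 | h1
    · exact absurd (lB b hbB a (hA ha) h1) hb
    · exact h1 ▸ ha
    · exact lA a ha b (hB hbB) h1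

noncomputable def colOf {k : ℕ} (R A : Finset (Fin k)) (i : Fin k) : Option Bool :=
  if i ∈ R then if i ∈ A then if ∀ j ∈ A, j ≤ i then some true else none else some false else none

theorem colOf_ok {k : ℕ} (R A : Finset (Fin k)) (hA : A ⊆ R)
    (lA : ∀ i ∈ A, ∀ j ∈ R, j < i → j ∈ A) :
    ColOK R (colOf R A) ∧ R.filter (fun i => colOf R A i ≠ some false) = A := by
  refine ⟨⟨?_, ?_, ?_⟩, ?_⟩
  · intro i hi; simp [colOf, hi]
  · intro i i' h hlt
    unfold colOf at h ⊢
    split_ifs at h with h1 h2 h3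
    swap
    · simp at h
    split_ifs with g1 g2 g3
    · exact absurd (g3 i h2) hlt.not_ge
    · rfl
    · exact absurd (lA i h2 i' g1 hlt) g2
    · rfl
  · intro i hi h
    unfold colOf
    rw [if_pos hi]
    split_ifs with h1 h2
    · simp
    · exfalso
      have hne : A.Nonempty := ⟨i, h1⟩
      have hm := A.max'_mem hne
      have him : i < A.max' hne := by
        refine lt_of_le_of_ne (A.le_max' i h1) fun e => h2 fun j hj => ?_
        rw [e]; exact A.le_max' j hj
      refine h _ him ?_
      unfold colOf
      rw [if_pos (hA hm), if_pos hm, if_pos fun j hj => A.le_max' j hj]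
    · simp
  · ext i
    rw [mem_filter]
    unfold colOf
    constructor
    · rintro ⟨h1, h2⟩
      by_contra h3
      simp [h1, h3] at h2
    · intro h
      refine ⟨hA h, ?_⟩
      rw [if_pos (hA h), if_pos h]
      split_ifs <;> simp

theorem col_eq {k : ℕ} (R : Finset (Fin k)) (col : Fin k → Option Bool) (h : ColOK R col) :
    (∀ i ∈ R.filter (fun i => col i ≠ some false), ∀ j ∈ R, j < i →
      j ∈ R.filter (fun i => col i ≠ some false)) ∧
    col = colOf R (R.filter fun i => col i ≠ some false) := by
  obtain ⟨h1, h2, h3⟩ := h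
  have hl : ∀ i ∈ R, col i ≠ some false → ∀ j ∈ R, j < i → col j ≠ some false := by
    intro i hi hci j hj hji hcj
    have hno : ∀ i', j < i' → col i' ≠ some true := by
      intro i' hi' e
      have := h2 i' j e hi'
      simp [this] at hcj
    have := h3 i hi fun i' hi' => hno i' (hji.trans hi')
    have h5 := hno i hji
    match hh : col i with
    | none => exact this hh
    | some true => exact h5 hh
    | some false => exact hci hh
  constructor
  · intro i hi j hj hji
    rw [mem_filter] at hi ⊢
    exact ⟨hj, hl i hi.1 hi.2 j hj hji⟩
  · funext i
    unfold colOf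
    simp only [mem_filter]
    split_ifs with g1 g2 g3
    · by_contra hne
      have hnone : col i = none := by
        match hh : col i with
        | none => rfl
        | some true => exact absurd hh hne
        | some false => exact absurd hh g2.2
      refine h3 i g1 (fun i' hi' e => ?_) hnone
      have hR : i' ∈ R := by
        by_contra hR
        rw [h1 i' hR] at e
        simp at e
      have := g3 i' ⟨hR, by rw [e]; simp⟩
      exact absurd hi' this.not_gt
    · by_contra hne
      have ht : col i = some true := by
        match hh : col i with
        | none => exact absurd hh hne
        | some true => rfl
        | some false => exact absurd hh g2.2
      apply g3
      intro j hj
      by_contra hji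
      have hij : i < j := not_le.1 hji
      have hnt : ∀ i', i < i' → col i' ≠ some true := by
        intro i' hi' e
        have := h2 i' i e hi'
        exact hne this
      have := h3 j hj.1 fun i' hi' => hnt i' (hij.trans hi')
      match hh : col j with
      | none => exact this hh
      | some true => exact hnt j hij hh
      | some false => exact hj.2 hh
    · by_contra hne
      exact g2 ⟨g1, hne⟩
    · exact h1 i g1

theorem count_zero (k w f : ℕ) :
    (Finset.univ.filter fun p : (Fin (k + 1) → Fin (w + 1)) × (Fin (k + 1) → Fin w → Option Bool) =>
      (GoodT (k + 1) w p ∧ (fr p.2).card = f + 1) ∧ p.1 (Fin.last k) = 0).card = Tn k w f := by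
  unfold Tn
  refine Finset.card_bij (fun p _ => (fun i => p.1 i.castSucc, fun i => p.2 i.castSucc)) ?_ ?_ ?_
  · rintro ⟨l, F⟩ h
    simp only [mem_filter, mem_univ, true_and] at h ⊢
    simp only [GoodT] at h ⊢
    obtain ⟨⟨⟨h1, h2⟩, h3⟩, h4⟩ := h
    rw [cct_snoc _ _ (by simp [h4])] at h2
    rw [fr_snoc _ h2.2] at h3
    exact ⟨⟨fun i j hij => h1 _ _ (by simpa using hij), h2.1⟩, by simpa using h3⟩
  · rintro ⟨l, F⟩ h ⟨l', F'⟩ h' e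
    simp only [mem_filter, mem_univ, true_and] at h h'
    simp only [GoodT] at h h'
    obtain ⟨⟨⟨h1, h2⟩, h3⟩, h4⟩ := h
    obtain ⟨⟨⟨h1', h2'⟩, h3'⟩, h4'⟩ := h'
    rw [cct_snoc _ _ (by simp [h4])] at h2
    rw [cct_snoc _ _ (by simp [h4'])] at h2'
    simp only [Prod.mk.injEq] at e ⊢
    constructor
    · funext i
      refine Fin.lastCases ?_ (fun i => ?_) i
      · rw [h4, h4']
      · exact congrFun e.1 i
    · funext i
      refine Fin.lastCases ?_ (fun i => ?_) i
      · funext c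
        rw [h2.2, h2'.2]
      · exact congrFun e.2 i
  · rintro ⟨l, F⟩ h
    simp only [mem_filter, mem_univ, true_and] at h
    simp only [GoodT] at h
    obtain ⟨⟨h1, h2⟩, h3⟩ := h
    refine ⟨(Fin.snoc (α := fun _ => Fin (w + 1)) l 0,
      Fin.snoc (α := fun _ => Fin w → Option Bool) F (fun _ => none)), ?_, ?_⟩
    · simp only [mem_filter, mem_univ, true_and]
      simp only [GoodT]
      refine ⟨⟨⟨?_, ?_⟩, ?_⟩, by simp⟩
      · intro i j
        refine Fin.lastCases ?_ (fun j => ?_) j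
        · simp
        · refine Fin.lastCases ?_ (fun i => ?_) i
          · intro hh
            exact absurd (Fin.castSucc_lt_last j) hh.not_gt
          · intro hh
            simpa using h1 i j (by simpa using hh)
      · rw [cct_snoc _ _ (by simp)]
        simpa using h2
      · rw [fr_snoc _ (by simp)]
        simpa using h3
    · simp

theorem count_zero' (k w : ℕ) :
    (Finset.univ.filter fun p : (Fin (k + 1) → Fin (w + 1)) × (Fin (k + 1) → Fin w → Option Bool) =>
      (GoodT (k + 1) w p ∧ (fr p.2).card = 0) ∧ p.1 (Fin.last k) = 0).card = 0 := by
  rw [Finset.card_eq_zero, Finset.filter_eq_empty_iff]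
  rintro ⟨l, F⟩ - h
  simp only [GoodT] at h
  obtain ⟨⟨⟨h1, h2⟩, h3⟩, h4⟩ := h
  rw [cct_snoc _ _ (by simp [h4])] at h2
  rw [fr_snoc _ h2.2] at h3
  omega

theorem count_pos (k w f : ℕ) :
    (Finset.univ.filter
      fun p : (Fin (k + 1) → Fin (w + 1 + 1)) × (Fin (k + 1) → Fin (w + 1) → Option Bool) =>
      (GoodT (k + 1) (w + 1) p ∧ (fr p.2).card = f) ∧ ¬ p.1 (Fin.last k) = 0).card
      = Sn (k + 1) w f := by
  have pos : ∀ l : Fin (k + 1) → Fin (w + 1 + 1),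
      (∀ i j, i ≤ j → (l j : ℕ) ≤ (l i : ℕ)) → ¬ l (Fin.last k) = 0 → ∀ i, 0 < (l i : ℕ) := by
    intro l h h' i
    have := h i (Fin.last k) (Fin.le_last i)
    have h2 : (l (Fin.last k) : ℕ) ≠ 0 := fun e => h' (Fin.ext e)
    omega
  unfold Sn
  refine Finset.card_bij
    (fun p _ => (fun i => ⟨(p.1 i : ℕ) - 1, by have := (p.1 i).2; omega⟩,
      fun i c => p.2 i c.succ)) ?_ ?_ ?_
  · rintro ⟨l, F⟩ h
    simp only [mem_filter, mem_univ, true_and] at h ⊢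
    simp only [GoodT] at h ⊢
    obtain ⟨⟨⟨h1, h2⟩, h3⟩, h4⟩ := h
    rw [cct_cons _ _ (pos l h1 h4)] at h2
    refine ⟨⟨fun i j hij => Nat.sub_le_sub_right (h1 i j hij) 1, h2.1⟩, ?_⟩
    rw [fr_cons] at h3
    rw [← h3]
    exact Finset.card_filter_le _ _
  · rintro ⟨l, F⟩ h ⟨l', F'⟩ h' e
    simp only [mem_filter, mem_univ, true_and] at h h'
    simp only [GoodT] at h h'
    obtain ⟨⟨⟨h1, h2⟩, h3⟩, h4⟩ := h
    obtain ⟨⟨⟨h1', h2'⟩, h3'⟩, h4'⟩ := h'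
    have p1 := pos l h1 h4
    have p2 := pos l' h1' h4'
    rw [cct_cons _ _ p1] at h2
    rw [cct_cons _ _ p2] at h2'
    simp only [Prod.mk.injEq] at e ⊢
    rw [fr_cons] at h3 h3'
    have eT := e.2
    rw [← eT] at h2' h3'
    obtain ⟨a1, a2⟩ := col_eq _ _ h2.2
    obtain ⟨b1, b2⟩ := col_eq _ _ h2'.2
    have hAB := lower_unique _ _ _ (Finset.filter_subset _ _) (Finset.filter_subset _ _)
      (h3.trans h3'.symm) a1 b1
    rw [← hAB, ← a2] at b2
    constructor
    · funext i
      have := congrFun e.1 i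
      simp only [Fin.mk.injEq] at this
      have q1 := p1 i
      have q2 := p2 i
      ext
      omega
    · funext i c
      refine Fin.cases ?_ (fun c => ?_) c
      · exact (congrFun b2 i).symm
      · exact congrFun (congrFun e.2 i) c
  · rintro ⟨l, F⟩ h
    simp only [mem_filter, mem_univ, true_and] at h
    simp only [GoodT] at h
    obtain ⟨⟨h1, h2⟩, h3⟩ := h
    obtain ⟨A, hA, hc, lA⟩ := lower_exists _ _ h3
    obtain ⟨c1, c2⟩ := colOf_ok _ _ hA lA
    refine ⟨(fun i => (l i).succ,
      fun i => Fin.cons (α := fun _ => Option Bool) (colOf (fr F) A i) (F i)), ?_, ?_⟩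
    · simp only [mem_filter, mem_univ, true_and]
      simp only [GoodT]
      refine ⟨⟨⟨?_, ?_⟩, ?_⟩, Fin.succ_ne_zero _⟩
      · intro i j hij
        simpa using h1 i j hij
      · rw [cct_cons _ _ (by simp)]
        simp only [Fin.cons_succ, Fin.cons_zero, Fin.val_succ, Nat.add_sub_cancel]
        exact ⟨h2, c1⟩
      · rw [fr_cons]
        simp only [Fin.cons_succ, Fin.cons_zero]
        rw [← hc]
        exact congrArg _ c2
    · simp

theorem split_card {α : Type} [Fintype α] (P Q : α → Prop)
    [DecidablePred P] [DecidablePred fun p => P p ∧ Q p] [DecidablePred fun p => P p ∧ ¬ Q p] :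
    (Finset.univ.filter P).card = (Finset.univ.filter fun p => P p ∧ Q p).card
      + (Finset.univ.filter fun p => P p ∧ ¬ Q p).card := by
  rw [← Finset.card_union_of_disjoint]
  · congr 1
    ext p
    simp only [mem_filter, mem_univ, true_and, mem_union]
    tauto
  · rw [Finset.disjoint_left]
    intro p
    simp only [mem_filter, mem_univ, true_and]
    tauto

theorem Tn_split (k w f : ℕ) :
    Tn (k + 1) (w + 1) (f + 1) = Tn k (w + 1) f + Sn (k + 1) w (f + 1) := by
  have h1 := count_zero k (w + 1) f
  have h2 := count_pos k w (f + 1)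
  rw [← h1, ← h2]
  unfold Tn
  exact split_card (α := (Fin (k + 1) → Fin (w + 1 + 1)) × (Fin (k + 1) → Fin (w + 1) → Option Bool))
    (fun p => GoodT (k + 1) (w + 1) p ∧ (fr p.2).card = f + 1) (fun p => p.1 (Fin.last k) = 0)

theorem Tn_split0 (k w : ℕ) : Tn (k + 1) (w + 1) 0 = Sn (k + 1) w 0 := by
  have h1 := count_zero' k (w + 1)
  have h2 := count_pos k w 0
  rw [← h2]
  unfold Tn
  refine (split_card (α := (Fin (k + 1) → Fin (w + 1 + 1)) × (Fin (k + 1) → Fin (w + 1) → Option Bool))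
    (fun p => GoodT (k + 1) (w + 1) p ∧ (fr p.2).card = 0) (fun p => p.1 (Fin.last k) = 0)).trans ?_
  rw [h1, Nat.zero_add]

theorem Tn_w0 (k f : ℕ) : Tn (k + 1) 0 (f + 1) = Tn k 0 f := by
  have h1 := count_zero k 0 f
  rw [← h1]
  unfold Tn
  refine congrArg Finset.card (Finset.filter_congr fun p _ => ?_)
  have : p.1 (Fin.last k) = 0 := Subsingleton.elim (α := Fin 1) _ _
  tauto

theorem Tn_w00 (k : ℕ) : Tn (k + 1) 0 0 = 0 := by
  refine Eq.trans ?_ (count_zero' k 0)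
  unfold Tn
  refine congrArg Finset.card (Finset.filter_congr fun p _ => ?_)
  have : p.1 (Fin.last k) = 0 := Subsingleton.elim (α := Fin 1) _ _
  tauto

theorem Sn_k0 (w : ℕ) : Sn 0 w 0 = 1 := by
  unfold Sn
  rw [Finset.filter_true_of_mem]
  · simp
  · rintro p -
    refine ⟨⟨fun i => i.elim0, fun i => i.elim0, fun i => i.elim0, fun i => i.elim0,
      fun i => i.elim0⟩, Nat.zero_le _⟩

def cm (n : ℕ) : ℕ → ℕ
  | 0 => 0
  | w + 1 => n.choose w

theorem pas (n w : ℕ) : (n + 1).choose w = n.choose w + cm n w := by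
  cases w with
  | zero => simp [cm]
  | succ w => rw [Nat.choose_succ_succ]; simp only [cm]; ring

def fm (f g w : ℕ) : ℤ :=
  ((f + g + w).choose w : ℤ) * ((g + w).choose w) - (cm (f + g + w) w : ℤ) * ((g + w).choose (w + 1))

theorem fm_g0 (f w : ℕ) : fm (f + 1) 0 (w + 1) = fm f 0 (w + 1) + fm (f + 1) 0 w := by
  unfold fm
  have e : f + 1 + 0 + (w + 1) = (f + 0 + (w + 1)) + 1 := by ring
  have e2 : f + 1 + 0 + w = (f + 0 + (w + 1)) := by ring
  rw [e, e2, pas]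
  simp [cm]

theorem fm_rec (f g w : ℕ) : fm (f + 1) (g + 1) (w + 1) - fm (f + 2) g (w + 1)
    = fm f (g + 1) (w + 1) - fm (f + 1) g (w + 1) + fm (f + 1) (g + 1) w := by
  unfold fm
  obtain ⟨n, hn⟩ : ∃ n, n = f + g + 1 + (w + 1) := ⟨_, rfl⟩
  obtain ⟨m, hm⟩ : ∃ m, m = g + (w + 1) := ⟨_, rfl⟩
  rw [show f + 1 + (g + 1) + (w + 1) = n + 1 by omega, show f + 2 + g + (w + 1) = n + 1 by omega,
    show f + (g + 1) + (w + 1) = n by omega, show f + 1 + g + (w + 1) = n by omega,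
    show f + 1 + (g + 1) + w = n by omega, show g + 1 + (w + 1) = m + 1 by omega,
    show g + 1 + w = m by omega, ← hm]
  simp only [cm, pas n, pas m, Nat.cast_add]
  ring

theorem fm_rec0 (g w : ℕ) : fm 0 (g + 1) (w + 1) - fm 1 g (w + 1) = fm 0 (g + 1) w := by
  unfold fm
  obtain ⟨m, hm⟩ : ∃ m, m = g + (w + 1) := ⟨_, rfl⟩
  rw [show 0 + (g + 1) + (w + 1) = m + 1 by omega, show 1 + g + (w + 1) = m + 1 by omega,
    show 0 + (g + 1) + w = m by omega, show g + 1 + (w + 1) = m + 1 by omega,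
    show g + 1 + w = m by omega, ← hm]
  simp only [cm, pas m, Nat.cast_add]
  ring

theorem fm_w0 (f g : ℕ) : fm f g 0 = 1 := by simp [fm, cm]

theorem Sn_w0 (k : ℕ) : ∀ f g, f + g = k → Sn k 0 f = 1 := by
  induction k with
  | zero => intro f g h; obtain rfl : f = 0 := by omega
            exact Sn_k0 0
  | succ k ih =>
    intro f g
    induction g generalizing f with
    | zero =>
      rintro h
      obtain rfl : f = k + 1 := by omega
      rw [Sn_succ, Tn_w0, Sn_big _ _ _ (by omega)]
      have := Sn_succ k 0 k
      rw [Sn_big k 0 (k + 1) (by omega), ih k 0 rfl] at this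
      omega
    | succ g ihg =>
      intro h
      rw [Sn_succ, ihg (f + 1) (by omega)]
      cases f with
      | zero => rw [Tn_w00]
      | succ f =>
        rw [Tn_w0]
        have := Sn_succ k 0 f
        rw [ih f (g + 1) (by omega), ih (f + 1) g (by omega)] at this
        omega

theorem Sn_formula (w : ℕ) : ∀ k f g, f + g = k → (Sn k w f : ℤ) = fm f g w := by
  induction w with
  | zero => intro k f g h; rw [Sn_w0 k f g h, fm_w0]; rfl
  | succ w ihw =>
    intro k
    induction k with
    | zero =>
      intro f g h
      obtain rfl : f = 0 := by omega
      obtain rfl : g = 0 := by omega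
      rw [Sn_k0]
      simp [fm]
    | succ k ih =>
      intro f g
      induction g generalizing f with
      | zero =>
        intro h
        obtain rfl : f = k + 1 := by omega
        rw [Sn_succ, Tn_split, Sn_big _ _ _ (Nat.lt_succ_self _)]
        have := Sn_succ k (w + 1) k
        rw [Sn_big k _ (k + 1) (by omega)] at this
        have h1 := ih k 0 rfl
        have h2 := ihw (k + 1) (k + 1) 0 rfl
        have h3 := fm_g0 k w
        push_cast
        rw [h2, h3, ← h1, this]
        push_cast
        ring
      | succ g ihg =>
        intro h
        have h0 := ihg (f + 1) (by omega)
        have h2 := ihw (k + 1) f (g + 1) h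
        rw [Sn_succ]
        cases f with
        | zero =>
          rw [Tn_split0]
          have h3 := fm_rec0 g w
          push_cast
          rw [h0, h2]
          simp only [Nat.zero_add]
          linarith
        | succ f =>
          rw [Tn_split]
          have := Sn_succ k (w + 1) f
          have h1 := ih f (g + 1) (by omega)
          have h1' := ih (f + 1) g (by omega)
          have h3 := fm_rec f g w
          rw [this] at h1
          push_cast at h1 ⊢
          rw [h0, h2]
          rw [show f + 1 + 1 = f + 2 by ring]
          linarith

theorem nara (k w : ℕ) : ((k + w : ℕ) + 1 : ℤ) * fm 0 k w
    = ((k + w + 1).choose k : ℤ) * ((k + w + 1).choose (k + 1)) := by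
  have s1 : (k + w + 1).choose k = (k + w + 1).choose (w + 1) :=
    Nat.choose_symm_of_eq_add (by omega)
  have s2 : (k + w + 1).choose (k + 1) = (k + w + 1).choose w :=
    Nat.choose_symm_of_eq_add (by omega)
  rw [s1, s2, pas _ (w + 1), pas _ w]
  unfold fm
  rw [Nat.zero_add]
  have r1 : ((k + w).choose (w + 1) : ℤ) * (w + 1) = (k + w).choose w * k := by
    have := Nat.choose_succ_right_eq (k + w) w
    rw [Nat.add_sub_cancel] at this
    exact_mod_cast this
  have r2 : ((k + w).choose w : ℤ) * w = cm (k + w) w * (k + 1) := by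
    cases w with
    | zero => simp [cm]
    | succ w =>
      have := Nat.choose_succ_right_eq (k + (w + 1)) w
      rw [show k + (w + 1) - w = k + 1 by omega] at this
      simp only [cm]
      exact_mod_cast this
  rw [show cm (k + w) (w + 1) = (k + w).choose w from rfl]
  generalize ((k + w).choose (w + 1)) = c at *
  generalize ((k + w).choose w) = b at *
  push_cast
  generalize ((cm (k + w) w : ℕ) : ℤ) = a at *
  linear_combination ((b : ℤ)) * r2 - (b : ℤ) * r1 - (a : ℤ) * r1 + (c : ℤ) * r2

/-- The number of Condensed Catalan tableaux of size `(k,n)` (over all shapes `lam`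
contained in the `k × (n-k)` rectangle) is the Narayana number
`(1/(n+1))·binom(n+1,k)·binom(n+1,k+1)`; equivalently, `(n+1)` times this number of
tableaux equals `binom(n+1,k)·binom(n+1,k+1)`. -/
theorem stmt8 (n k : ℕ) (hn : 1 ≤ n) (hkn : k ≤ n) :
    (n + 1) *
        (Finset.univ.filter
          (fun pr : (Fin k → Fin (n - k + 1)) × (Fin k → Fin (n - k) → Option Bool) =>
            (∀ i j : Fin k, i ≤ j → (pr.1 j : ℕ) ≤ (pr.1 i : ℕ)) ∧
            IsCCT k (n - k) (fun i => (pr.1 i : ℕ)) pr.2)).card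
      = Nat.choose (n + 1) k * Nat.choose (n + 1) (k + 1) := by
  have key : (Finset.univ.filter
          (fun pr : (Fin k → Fin (n - k + 1)) × (Fin k → Fin (n - k) → Option Bool) =>
            (∀ i j : Fin k, i ≤ j → (pr.1 j : ℕ) ≤ (pr.1 i : ℕ)) ∧
            IsCCT k (n - k) (fun i => (pr.1 i : ℕ)) pr.2)).card = Sn k (n - k) 0 := by
    unfold Sn
    congr 1
    ext p
    simp [GoodT]
  rw [key]
  obtain ⟨w, rfl⟩ := Nat.exists_eq_add_of_le hkn
  rw [Nat.add_sub_cancel_left]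
  have h1 := Sn_formula w k 0 k (by omega)
  have h2 := nara k w
  rw [← h1] at h2
  exact_mod_cast h2
end

section
/- Fix an integer n ≥ 0. The total number of Condensed Catalan tableaux of size (k,n) summed over all 0 ≤ k ≤ n equals the Catalan number C_{n+1} = (1/(n+2))·binom(2n+2, n+1). -/
open scoped Classical
open Finset

def GG (k w c : ℕ) (U : Finset (Fin w)) (lam : Fin k → Fin (w+1))
    (F : Fin k → Fin w → Option Bool) : Prop :=
  (∀ i j : Fin k, i ≤ j → (lam j : ℕ) ≤ (lam i : ℕ)) ∧
  (∀ i, c ≤ (lam i : ℕ)) ∧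
  (∀ (i : Fin k) (x : Fin w), ((lam i : ℕ) ≤ (x : ℕ) ∨ x ∉ U) → F i x = none) ∧
  (∀ (i : Fin k) (x x' : Fin w), F i x = some false → x' < x → F i x' = none) ∧
  (∀ (i i' : Fin k) (x : Fin w), F i x = some true → i' < i → F i' x = none) ∧
  (∀ (i : Fin k) (x : Fin w), (x : ℕ) < lam i → x ∈ U →
    (∀ i' : Fin k, i < i' → F i' x ≠ some true) →
    (∀ x' : Fin w, x < x' → F i x' ≠ some false) → F i x ≠ none)

def VV (w : ℕ) (A : Finset (Fin w)) (r : Fin w → Option Bool) : Prop :=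
  (∀ x, x ∉ A → r x = none) ∧
  (∀ x x', r x = some false → x' < x → r x' = none) ∧
  (∀ x ∈ A, (∀ x', x < x' → r x' ≠ some false) → r x ≠ none)

lemma GG_step (k w c : ℕ) (U : Finset (Fin w)) (lam : Fin k → Fin (w+1))
    (F : Fin k → Fin w → Option Bool) (l : Fin (w+1)) (r : Fin w → Option Bool) :
    GG (k+1) w c U (Fin.snoc (α := fun _ => Fin (w+1)) lam l)
      (Fin.snoc (α := fun _ => Fin w → Option Bool) F r) ↔
    c ≤ (l:ℕ) ∧ VV w (U.filter (fun x : Fin w => (x:ℕ) < l)) r ∧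
      GG k w l (U.filter (fun x => r x ≠ some true)) lam F := by
  have hlt : ∀ i : Fin k, ¬ (Fin.last k < i.castSucc) := fun i => by
    simpa using (Fin.castSucc_lt_last i).le
  have hle : ∀ i : Fin k, ¬ (Fin.last k ≤ i.castSucc) := fun i => by
    simp [Fin.castSucc_lt_last i]
  have hl' : ∀ i : Fin k, i.castSucc ≤ Fin.last k := fun i => (Fin.castSucc_lt_last i).le
  have hl2 : ∀ i : Fin k, i.castSucc < Fin.last k := fun i => (Fin.castSucc_lt_last i)
  unfold GG VV
  simp only [Fin.forall_fin_succ', Fin.snoc_castSucc, Fin.snoc_last, hlt, hle, hl', hl2,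
    Fin.castSucc_le_castSucc_iff, Fin.castSucc_lt_castSucc_iff, Finset.mem_filter,
    lt_self_iff_false, le_refl, forall_true_left, false_imp_iff, imp_true_iff, true_and, and_true]
  constructor
  · rintro ⟨h1, ⟨h2, h2'⟩, ⟨h3, h3'⟩, ⟨h4, h4'⟩, ⟨h5, h5'⟩, h6, h6'⟩
    refine ⟨h2', ⟨?_, h4', ?_⟩, ?_, ?_, ?_, h4, ?_, ?_⟩
    all_goals grind
  · rintro ⟨h2', ⟨h3', h4', h6'⟩, h1, h2, h3, h4, h5, h6⟩
    refine ⟨?_, ?_, ?_, ⟨h4, h4'⟩, ?_, ?_, ?_⟩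
    all_goals grind

lemma rank_sum (w : ℕ) (A : Finset (Fin w)) (g : ℕ → ℕ) :
    ∑ b ∈ A, g (A.filter (fun x => x ≤ b)).card = ∑ j ∈ Finset.range A.card, g (j+1) := by
  induction A using Finset.induction_on_max with
  | empty => simp
  | insert a s hs ih =>
    have ha : a ∉ s := fun h => lt_irrefl _ (hs a h)
    rw [Finset.sum_insert ha, Finset.card_insert_of_notMem ha, Finset.sum_range_succ, add_comm,
      ← ih]
    congr 1
    · apply Finset.sum_congr rfl
      intro b hb
      congr 2
      ext x
      have := hs b hb
      simp only [Finset.mem_filter, Finset.mem_insert]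
      constructor
      · rintro ⟨rfl | h, h'⟩
        · exact absurd this (not_lt.2 h')
        · exact ⟨h, h'⟩
      · rintro ⟨h, h'⟩; exact ⟨Or.inr h, h'⟩
    · rw [Finset.filter_true_of_mem, Finset.card_insert_of_notMem ha]
      intro x hx
      rcases Finset.mem_insert.1 hx with rfl | h
      · exact le_rfl
      · exact (hs x h).le

def rowN (w : ℕ) (A : Finset (Fin w)) : Fin w → Option Bool :=
  fun x => if x ∈ A then some true else none
def rowS (w : ℕ) (A : Finset (Fin w)) (b : Fin w) : Fin w → Option Bool :=
  fun x => if x = b then some false else if x ∈ A ∧ b < x then some true else none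

lemma VV_rows (w : ℕ) (A : Finset (Fin w)) :
    Finset.univ.filter (VV w A) = insert (rowN w A) (A.image (rowS w A)) := by
  ext r
  simp only [Finset.mem_filter, Finset.mem_univ, true_and, Finset.mem_insert, Finset.mem_image]
  constructor
  · rintro ⟨h1, h2, h3⟩
    by_cases h : ∃ b, r b = some false
    · obtain ⟨b, hb⟩ := h
      right
      refine ⟨b, by grind, ?_⟩
      funext x
      unfold rowS
      rcases lt_trichotomy x b with hx | hx | hx
      · grind
      · grind
      · by_cases hA : x ∈ A
        · have e1 : ∀ x', x ≤ x' → r x' ≠ some false := by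
            intro x' hx' h'
            have := h2 x' b h' (lt_of_lt_of_le hx hx')
            simp [hb] at this
          have := h3 x hA (fun x' hx' => e1 x' hx'.le)
          have := e1 x le_rfl
          rcases hr : r x with _ | _ | _ <;> grind
        · grind
    · push Not at h
      left
      funext x
      unfold rowN
      have := h x
      have := h1 x
      have := h3 x
      rcases hr : r x with _ | _ | _ <;> grind
  · rintro (rfl | ⟨b, hb, rfl⟩)
    · unfold VV rowN; grind
    · unfold VV rowS; 
      refine ⟨?_, ?_, ?_⟩
      · grind
      · grind
      · intro x hx h
        have := h b
        rcases lt_trichotomy x b with hx | hx | hx <;> grind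

lemma VV_sum (w : ℕ) (A : Finset (Fin w)) (g : ℕ → ℕ) :
    ∑ r ∈ Finset.univ.filter (VV w A), g (A.filter (fun x => r x ≠ some true)).card
      = ∑ j ∈ Finset.range (A.card+1), g j := by
  rw [VV_rows, Finset.sum_insert, Finset.sum_image, Finset.sum_range_succ', ← rank_sum, add_comm]
  · congr 1
    · apply Finset.sum_congr rfl
      intro b hb
      congr 2
      ext x
      simp only [Finset.mem_filter, rowS]
      grind
    · congr 1
      rw [Finset.card_eq_zero]
      ext x
      simp only [Finset.mem_filter, rowN]
      grind
  · intro b hb b' hb' h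
    have := congrFun h b
    simp only [rowS] at this
    grind
  · simp only [Finset.mem_image, not_exists, not_and]
    intro b hb h
    have := congrFun h b
    simp only [rowS, rowN] at this
    grind

def RR : ℕ → ℕ → ℕ → ℕ
  | 0, _, _ => 1
  | k+1, e, m => ∑ l ∈ Finset.range (e+1), ∑ j ∈ Finset.range (m+l+1), RR k (e-l) j

noncomputable def NN (k w c : ℕ) (U : Finset (Fin w)) : ℕ :=
  ∑ p : (Fin k → Fin (w+1)) × (Fin k → Fin w → Option Bool), if GG k w c U p.1 p.2 then 1 else 0

lemma NN_succ (k w c : ℕ) (U : Finset (Fin w)) :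
    NN (k+1) w c U = ∑ l : Fin (w+1), if c ≤ (l:ℕ) then
      ∑ r ∈ Finset.univ.filter (VV w (U.filter (fun x : Fin w => (x:ℕ) < l))),
        NN k w l (U.filter (fun x => r x ≠ some true)) else 0 := by
  unfold NN
  rw [Fintype.sum_prod_type, ← (Fin.snocEquiv (fun _ => Fin (w+1))).sum_comp,
    Fintype.sum_prod_type]
  apply Finset.sum_congr rfl
  intro l _
  simp_rw [← (Fin.snocEquiv (fun _ : Fin (k+1) => Fin w → Option Bool)).sum_comp,
    Fintype.sum_prod_type, Finset.sum_filter]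
  rw [Finset.sum_comm]
  simp only [Fin.snocEquiv, Equiv.coe_fn_mk, GG_step]
  split_ifs with h
  · apply Finset.sum_congr rfl
    intro r _
    split_ifs with h' <;> simp [h, h']
  · simp [h]

lemma card_low (w c l : ℕ) (hc : c ≤ l) (hl : l ≤ w) (U : Finset (Fin w))
    (hU : ∀ x : Fin w, c ≤ (x:ℕ) → x ∈ U) :
    (U.filter (fun x : Fin w => (x:ℕ) < l)).card = (U.filter (fun x : Fin w => (x:ℕ) < c)).card + (l - c) := by
  obtain ⟨d, rfl⟩ := Nat.exists_eq_add_of_le hc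
  clear hc
  induction d with
  | zero => simp
  | succ d ih =>
    have e : U.filter (fun x : Fin w => (x:ℕ) < c + (d+1)) =
        insert (⟨c+d, by omega⟩ : Fin w) (U.filter (fun x : Fin w => (x:ℕ) < c + d)) := by
      ext x
      simp only [Finset.mem_filter, Finset.mem_insert, Fin.ext_iff]
      constructor
      · rintro ⟨h, h'⟩
        by_cases hh : (x:ℕ) = c + d
        · exact Or.inl hh
        · exact Or.inr ⟨h, by omega⟩
      · rintro (h | ⟨h, h'⟩)
        · exact ⟨hU x (by omega), by omega⟩
        · exact ⟨h, by omega⟩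
    rw [e, Finset.card_insert_of_notMem (by simp), ih (by omega)]
    omega

lemma NN_eq (k w : ℕ) : ∀ (c : ℕ) (_ : c ≤ w) (U : Finset (Fin w))
    (_ : ∀ x : Fin w, c ≤ (x:ℕ) → x ∈ U),
    NN k w c U = RR k (w - c) (U.filter (fun x : Fin w => (x:ℕ) < c)).card := by
  induction k with
  | zero =>
    intro c hc U hU
    simp [NN, RR, GG]
  | succ k ih =>
    intro c hc U hU
    rw [NN_succ, RR]
    have key : ∀ l : Fin (w+1), (if c ≤ (l:ℕ) then
      ∑ r ∈ Finset.univ.filter (VV w (U.filter (fun x : Fin w => (x:ℕ) < l))),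
        NN k w l (U.filter (fun x => r x ≠ some true)) else 0) =
        (fun l : ℕ => if c ≤ l then 
          ∑ j ∈ Finset.range ((U.filter (fun x : Fin w => (x:ℕ) < c)).card + (l - c) + 1),
            RR k (w - l) j else 0) (l:ℕ) := by
      intro l
      by_cases h : c ≤ (l:ℕ)
      · simp only [h, if_true]
        rw [← card_low w c l h (by omega) U hU, ← VV_sum]
        apply Finset.sum_congr rfl
        intro r hr
        rw [ih l (by omega)]
        · congr 2
          ext x
          simp only [Finset.mem_filter]
          tauto
        · intro x hx
          have := (Finset.mem_filter.1 hr).2.1 x (by simp; intro _; omega)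
          simp [this]
          exact hU x (by omega)
      · simp [h]
    rw [Finset.sum_congr rfl (fun l _ => key l), Fin.sum_univ_eq_sum_range (fun l : ℕ => if c ≤ l then 
          ∑ j ∈ Finset.range ((U.filter (fun x : Fin w => (x:ℕ) < c)).card + (l - c) + 1),
            RR k (w - l) j else 0) (w+1)]
    obtain ⟨d, rfl⟩ := Nat.exists_eq_add_of_le hc
    rw [show c + d + 1 = c + (d+1) by ring, Finset.sum_range_add]
    rw [Finset.sum_eq_zero, zero_add]
    · rw [Nat.add_sub_cancel_left]
      apply Finset.sum_congr rfl
      intro l _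
      simp [Nat.add_sub_add_left]
    · intro x hx
      simp at hx
      simp [hx]

lemma RR_succ_zero (k m : ℕ) : RR (k+1) 0 m = ∑ j ∈ Finset.range (m+1), RR k 0 j := by
  simp [RR]

lemma RR_succ_succ (k e m : ℕ) : RR (k+1) (e+1) m =
    RR (k+1) e (m+1) + ∑ j ∈ Finset.range (m+1), RR k (e+1) j := by
  rw [RR, Finset.sum_range_succ', RR]
  congr 1
  apply Finset.sum_congr rfl
  intro l _
  rw [show e + 1 - (l+1) = e - l by omega, show m + (l+1) + 1 = m + 1 + l + 1 by ring]

def TT (n m : ℕ) : ℕ := ∑ p ∈ Finset.HasAntidiagonal.antidiagonal n, RR p.1 p.2 m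

lemma TT_zero (m : ℕ) : TT 0 m = 1 := by simp [TT, RR]

lemma TT_succ (n m : ℕ) : TT (n+1) m = TT n (m+1) + ∑ j ∈ Finset.range (m+1), TT n j := by
  have e : ∀ p ∈ Finset.HasAntidiagonal.antidiagonal (n+1), RR p.1 p.2 m =
      (if p.2 = 0 then 0 else RR p.1 (p.2-1) (m+1)) +
      (if p.1 = 0 then 0 else ∑ j ∈ Finset.range (m+1), RR (p.1-1) p.2 j) := by
    rintro ⟨k, e⟩ h
    rw [Finset.HasAntidiagonal.mem_antidiagonal] at h
    rcases k with _ | k <;> rcases e with _ | e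
    · simp at h
    · simp [RR]
    · simp [RR_succ_zero]
    · simp [RR_succ_succ]
  rw [TT, Finset.sum_congr rfl e, Finset.sum_add_distrib, Finset.Nat.sum_antidiagonal_succ',
    Finset.Nat.sum_antidiagonal_succ]
  simp only [TT]
  rw [Finset.sum_comm (s := Finset.range (m+1))]
  simp

lemma TT_rec (n m : ℕ) : TT (n+1) (m+1) = TT (n+1) m + TT n (m+2) := by
  rw [TT_succ, TT_succ, Finset.sum_range_succ _ (m+1)]
  ring

lemma TT_closed (n : ℕ) : ∀ m, TT (n+1) m + (2*n+m+3).choose n = (2*n+m+3).choose (n+1) := by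
  induction n with
  | zero =>
    intro m
    simp [TT_succ, TT_zero]
    ring
  | succ n ih =>
    intro m
    induction m with
    | zero =>
      rw [TT_succ]
      simp only [zero_add, Finset.sum_range_one]
      have h0 := ih 0
      have h1 := ih 1
      have a1 := Nat.choose_succ_succ (2*n+4) n
      have a2 := Nat.choose_succ_succ (2*n+4) (n+1)
      have a3 := Nat.choose_succ_succ (2*n+3) n
      have a4 := Nat.choose_succ_succ (2*n+3) (n+1)
      have a5 := Nat.choose_symm_half (n+1)
      have e : 2 * (n+1) + 1 = 2*n+3 := by ring
      have e' : 2 * (n+1) + 0 + 3 = 2*n+4+1 := by ring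
      rw [e] at a5
      rw [e']
      simp only [Nat.succ_eq_add_one, add_zero, show 2*n+1+3 = 2*n+4 by ring, show 2*n+3+1 = 2*n+4 by ring] at *
      omega
    | succ m ihm =>
      rw [TT_rec]
      have h1 := ih (m+2)
      have a1 := Nat.choose_succ_succ (2*n+m+5) n
      have a2 := Nat.choose_succ_succ (2*n+m+5) (n+1)
      simp only [Nat.succ_eq_add_one, show 2*(n+1)+m+3 = 2*n+m+5 by ring, show 2*n+(m+2)+3 = 2*n+m+5 by ring, show 2*(n+1)+(m+1)+3 = 2*n+m+5+1 by ring] at *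
      omega

lemma TT_catalan (n : ℕ) : TT n 0 = catalan (n+1) := by
  rcases n with _ | n
  · simp [TT_zero]
  · have h := TT_closed n 0
    have h2 := succ_mul_catalan_eq_centralBinom (n+1+1)
    rw [Nat.centralBinom] at h2
    have a1 := Nat.choose_succ_succ (2*n+3) (n+1)
    have a2 := Nat.choose_symm_half (n+1)
    have a3 := Nat.choose_succ_right_eq (2*n+3) n
    simp only [Nat.succ_eq_add_one, add_zero, show 2*(n+1)+1 = 2*n+3 by ring, show 2*(n+1+1) = 2*n+3+1 by ring,
      show 2*n+3-n = n+3 by omega] at *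
    have : (n+3) * TT (n+1) 0 = (n+3) * catalan (n+1+1) := by
      rw [show n + 3 = n+1+1+1 by ring, h2, a1, a2]
      nlinarith
    exact Nat.eq_of_mul_eq_mul_left (by omega) this

/-- The total number of Condensed Catalan tableaux of size `(k,n)`, summed over all
`0 ≤ k ≤ n`, equals the Catalan number `C_(n+1)`. -/
theorem stmt9 (n : ℕ) :
    (∑ k ∈ Finset.range (n + 1),
        (Finset.univ.filter
          (fun pr : (Fin k → Fin (n - k + 1)) × (Fin k → Fin (n - k) → Option Bool) =>
            (∀ i j : Fin k, i ≤ j → (pr.1 j : ℕ) ≤ (pr.1 i : ℕ)) ∧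
            IsCCT k (n - k) (fun i => (pr.1 i : ℕ)) pr.2)).card)
      = catalan (n + 1) := by
  rw [← TT_catalan, TT, Finset.Nat.sum_antidiagonal_eq_sum_range_succ (fun a b => RR a b 0)]
  apply Finset.sum_congr rfl
  intro k _
  have h := NN_eq k (n-k) 0 (Nat.zero_le _) Finset.univ (by simp)
  simp only [not_lt_zero, Finset.filter_false, Finset.card_empty, Nat.sub_zero] at h
  rw [← h, NN, Finset.card_filter]
  apply Finset.sum_congr rfl
  rintro ⟨lam, F⟩ _
  refine if_congr ?_ rfl rfl
  unfold IsCCT GG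
  simp only [Finset.mem_univ, not_true_eq_false, or_false, Nat.zero_le, implies_true, true_and,
    forall_true_left]
  refine and_congr_right fun h0 => and_congr_right fun h1 => and_congr_right fun h2 =>
    and_congr_right fun h3 => ?_
  constructor
  · intro h i c hc ha hb
    exact h i c hc ha (fun c' hc' _ => hb c' hc')
  · intro h i c hc ha hb
    refine h i c hc ha (fun c' hc' hf => ?_)
    by_cases hl : (c':ℕ) < lam i
    · exact hb c' hc' hl hf
    · rw [h1 i c' (by omega)] at hf
      simp at hf
end

section
/- Fix integers m ≥ 2 and k ≥ 2. Then N'_{m,k}(α,β) = α^k β^m Σ_{j=0}^{m−1} Σ_{ℓ=0}^{k−1} H_{j,ℓ} · c_{j,ℓ} · α^j β^ℓ, where c_{j,ℓ} is the number of Condensed Catalan tableaux of size (k−1, m+k−2) (shape contained in the (k−1) × (m−1) rectangle) whose filling contains exactly j α's and ℓ β's, and H_{j,ℓ} = α^{m−j} Σ_{s=0}^{k−ℓ−1} β^s + β^{k−ℓ} Σ_{t=0}^{m−j−1} α^t + Σ_{t=1}^{m−j−1} Σ_{s=1}^{k−ℓ−1} α^t β^s is the sum of the weights of the possible Catalan fillings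 of the hook consisting of a first row of length m and first column of length k, when the inner tableau has k−1−ℓ α-indexed (free) rows and m−1−j β-indexed (free) columns. The identity holds in ℤ[α,β]. -/
open scoped Classical
open Finset

theorem fin_atmost {n : ℕ} (P : Fin n → Prop) [DecidablePred P] (h : ∀ i j, P i → P j → i = j) :
    (∑ i, if P i then 1 else 0 : ℕ) = if ∃ i, P i then 1 else 0 := by
  split_ifs with hx
  · obtain ⟨i, hi⟩ := hx
    rw [Finset.sum_eq_single i]
    · simp [hi]
    · intro j _ hj
      rw [if_neg]
      intro hP
      exact hj (h _ _ hP hi)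
    · simp
  · push Not at hx
    simp [hx]

def oi (b : Bool) (v : Option Bool) : ℕ := if v = some b then 1 else 0

def cnt {n : ℕ} (b : Bool) (r : Fin n → Option Bool) : ℕ := ∑ i, oi b (r i)

def rowOK {n : ℕ} (b : Bool) (free : Fin n → Prop) (r : Fin n → Option Bool) : Prop :=
  ∀ c, (r c = none ↔ (¬ free c ∨ ∃ c', c < c' ∧ r c' = some b))

theorem rowOK_cons {n : ℕ} (b : Bool) (free : Fin (n+1) → Prop) (v : Option Bool)
    (r : Fin n → Option Bool) :
    rowOK b free (Fin.cons v r : Fin (n+1) → Option Bool) ↔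
      (v = none ↔ (¬ free 0 ∨ ∃ c, r c = some b)) ∧ rowOK b (fun c => free c.succ) r := by
  unfold rowOK
  rw [Fin.forall_fin_succ]
  simp [Fin.exists_fin_succ]

theorem cnt_cons {n : ℕ} (b : Bool) (v : Option Bool) (r : Fin n → Option Bool) :
    cnt b (Fin.cons v r : Fin (n+1) → Option Bool) = oi b v + cnt b r := by
  simp [cnt, Fin.sum_univ_succ]

theorem sum_consOB {R : Type*} [CommRing R] {n : ℕ} (f : (Fin (n+1) → Option Bool) → R) :
    ∑ r, f r = ∑ r : Fin n → Option Bool,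
      (f (Fin.cons none r) + (f (Fin.cons (some true) r) + f (Fin.cons (some false) r))) := by
  rw [← (Fin.consEquiv (fun _ => Option Bool)).sum_comp, Fintype.sum_prod_type]
  simp [Fintype.sum_option, Finset.sum_add_distrib, Fin.consEquiv]

theorem row_gf {R : Type*} [CommRing R] (x y : R) (b : Bool) : ∀ (n : ℕ) (free : Fin n → Prop),
    (∑ r : Fin n → Option Bool, (if rowOK b free r ∧ ¬ (∃ c, r c = some b) then
        x ^ cnt (!b) r * y ^ cnt b r else 0)) = x ^ (∑ c, if free c then 1 else 0 : ℕ) ∧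
    (∑ r : Fin n → Option Bool, (if rowOK b free r ∧ (∃ c, r c = some b) then
        x ^ cnt (!b) r * y ^ cnt b r else 0)) =
      (∑ t ∈ Finset.range (∑ c, if free c then 1 else 0 : ℕ), x ^ t) * y := by
  intro n
  induction n with
  | zero => intro free; simp [rowOK, cnt]
  | succ n ih =>
    intro free
    obtain ⟨h1, h2⟩ := ih (fun c => free c.succ)
    rw [sum_consOB, sum_consOB, Fin.sum_univ_succ]
    by_cases hf : free 0
    · rw [if_pos hf, add_comm 1, pow_succ', Finset.sum_range_succ, add_mul, ← h1, ← h2,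
        Finset.mul_sum, Finset.sum_mul, ← Finset.sum_add_distrib]
      constructor
      · refine Finset.sum_congr rfl fun r _ => ?_
        by_cases hr : ∃ c, r c = some b <;> by_cases ho : rowOK b (fun c => free c.succ) r <;>
        cases b <;> simp_all [rowOK_cons, cnt_cons, oi, Fin.exists_fin_succ] <;> ring
      · refine Finset.sum_congr rfl fun r _ => ?_
        by_cases hr : ∃ c, r c = some b <;> by_cases ho : rowOK b (fun c => free c.succ) r <;>
        cases b <;> simp_all [rowOK_cons, cnt_cons, oi, Fin.exists_fin_succ] <;> ring
    · rw [if_neg hf, zero_add, ← h1, ← h2]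
      constructor
      · refine Finset.sum_congr rfl fun r _ => ?_
        simp [rowOK_cons, cnt_cons, oi, Fin.exists_fin_succ, hf]
      · refine Finset.sum_congr rfl fun r _ => ?_
        simp [rowOK_cons, cnt_cons, oi, Fin.exists_fin_succ, hf]

def freeC {h w : ℕ} (G : Fin h → Fin w → Option Bool) (c : Fin w) : Prop := ¬ ∃ i, G i c = some true
def freeR {h w : ℕ} (G : Fin h → Fin w → Option Bool) (i : Fin h) : Prop := ¬ ∃ c, G i c = some false

def glue {h w : ℕ} (v : Option Bool) (r : Fin w → Option Bool) (q : Fin h → Option Bool)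
    (G : Fin h → Fin w → Option Bool) : Fin (h+1) → Fin (w+1) → Option Bool :=
  Fin.cons (Fin.cons v r : Fin (w+1) → Option Bool)
    (fun i => (Fin.cons (q i) (G i) : Fin (w+1) → Option Bool))

section
variable {h w : ℕ} (v : Option Bool) (r : Fin w → Option Bool) (q : Fin h → Option Bool)
    (G : Fin h → Fin w → Option Bool)

theorem glue00 : glue v r q G 0 0 = v := rfl
theorem glue0s (c : Fin w) : glue v r q G 0 c.succ = r c := rfl
theorem glues0 (i : Fin h) : glue v r q G i.succ 0 = q i := rfl
theorem gluess (i : Fin h) (c : Fin w) : glue v r q G i.succ c.succ = G i c := rfl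
end

theorem aCount_eq (k w : ℕ) (F : Fin k → Fin w → Option Bool) :
    aCount k w F = ∑ i, ∑ c, oi true (F i c) := by
  unfold aCount
  rw [Finset.card_filter, Fintype.sum_prod_type]
  rfl

theorem bCount_eq (k w : ℕ) (F : Fin k → Fin w → Option Bool) :
    bCount k w F = ∑ i, ∑ c, oi false (F i c) := by
  unfold bCount
  rw [Finset.card_filter, Fintype.sum_prod_type]
  rfl

theorem aCount_glue {h w : ℕ} (v : Option Bool) (r : Fin w → Option Bool) (q : Fin h → Option Bool)
    (G : Fin h → Fin w → Option Bool) : aCount (h+1) (w+1) (glue v r q G) =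
      oi true v + cnt true r + cnt true q + aCount h w G := by
  rw [aCount_eq, aCount_eq]
  simp only [Fin.sum_univ_succ, glue00, glue0s, glues0, gluess, cnt, Finset.sum_add_distrib]
  ring

theorem bCount_glue {h w : ℕ} (v : Option Bool) (r : Fin w → Option Bool) (q : Fin h → Option Bool)
    (G : Fin h → Fin w → Option Bool) : bCount (h+1) (w+1) (glue v r q G) =
      oi false v + cnt false r + cnt false q + bCount h w G := by
  rw [bCount_eq, bCount_eq]
  simp only [Fin.sum_univ_succ, glue00, glue0s, glues0, gluess, cnt, Finset.sum_add_distrib]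
  ring

theorem free_a {h w : ℕ} {lam : Fin h → ℕ} {G : Fin h → Fin w → Option Bool}
    (H : IsCCT h w lam G) : (∑ c, if freeC G c then 1 else 0 : ℕ) + aCount h w G = w := by
  rw [aCount_eq, Finset.sum_comm, ← Finset.sum_add_distrib]
  obtain ⟨H1, H2, H3, H4⟩ := H
  have : ∀ c : Fin w, ((if freeC G c then 1 else 0) +
      ∑ i, oi true (G i c) : ℕ) = 1 := by
    intro c
    unfold oi
    rw [fin_atmost (fun i => G i c = some true)]
    · unfold freeC
      split_ifs <;> simp_all
    · intro i j hi hj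
      rcases lt_trichotomy i j with hl | hl | hl
      · have := H3 _ _ _ hj hl
        simp_all
      · exact hl
      · have := H3 _ _ _ hi hl
        simp_all
  simp [this]

theorem free_b {h w : ℕ} {lam : Fin h → ℕ} {G : Fin h → Fin w → Option Bool}
    (H : IsCCT h w lam G) : (∑ i, if freeR G i then 1 else 0 : ℕ) + bCount h w G = h := by
  rw [bCount_eq, ← Finset.sum_add_distrib]
  obtain ⟨H1, H2, H3, H4⟩ := H
  have : ∀ i : Fin h, ((if freeR G i then 1 else 0) +
      ∑ c, oi false (G i c) : ℕ) = 1 := by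
    intro i
    unfold oi
    rw [fin_atmost (fun c => G i c = some false)]
    · unfold freeR
      split_ifs <;> simp_all
    · intro c d hi hj
      rcases lt_trichotomy c d with hl | hl | hl
      · have := H2 _ _ _ hj hl
        simp_all
      · exact hl
      · have := H2 _ _ _ hi hl
        simp_all
  simp [this]

theorem isCCT_glue {h w : ℕ} (L : Fin (h+1) → ℕ) (lam : Fin h → ℕ) (hL0 : L 0 = w + 1)
    (hL : ∀ i, L i.succ = lam i + 1)
    (v : Option Bool) (r : Fin w → Option Bool) (q : Fin h → Option Bool)
    (G : Fin h → Fin w → Option Bool) :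
    IsCCT (h+1) (w+1) L (glue v r q G) ↔
      IsCCT h w lam G ∧ rowOK false (freeC G) r ∧ rowOK true (freeR G) q ∧
      (v = none ↔ ((∃ c, r c = some false) ∨ ∃ i, q i = some true)) := by
  constructor
  · rintro ⟨H1, H2, H3, H4⟩
    simp only [Fin.forall_fin_succ, glue00, glue0s, glues0, gluess, hL0, hL] at H1 H2 H3 H4
    simp at H1 H2 H3 H4
    have G1 : ∀ (i : Fin h) (c : Fin w), lam i ≤ (c : ℕ) → G i c = none := by grind
    refine ⟨⟨G1, by grind, by grind, ?_⟩, ?_, ?_, ?_⟩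
    · grind
    · intro c
      unfold freeC
      constructor
      · grind
      · grind
    · intro c
      unfold freeR
      constructor
      · grind
      · grind
    · grind
  · rintro ⟨⟨H1, H2, H3, H4⟩, Hr, Hq, Hv⟩
    unfold rowOK freeC at Hr
    unfold rowOK freeR at Hq
    refine ⟨?_, ?_, ?_, ?_⟩ <;>
      simp only [Fin.forall_fin_succ, glue00, glue0s, glues0, gluess, hL0, hL] <;>
      simp
    · grind
    · grind
    · grind
    · grind

theorem unglue {h w : ℕ} (F : Fin (h+1) → Fin (w+1) → Option Bool) :
    glue (F 0 0) (fun c => F 0 c.succ) (fun i => F i.succ 0) (fun i c => F i.succ c.succ) = F := by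
  funext i c
  refine Fin.cases ?_ (fun i => ?_) i <;> refine Fin.cases ?_ (fun c => ?_) c <;> rfl

def hookOK {h w : ℕ} (A : Fin w → Prop) (B : Fin h → Prop)
    (t : Option Bool × (Fin w → Option Bool) × (Fin h → Option Bool)) : Prop :=
  rowOK false A t.2.1 ∧ rowOK true B t.2.2 ∧
      (t.1 = none ↔ ((∃ c, t.2.1 c = some false) ∨ ∃ i, t.2.2 i = some true))

theorem sum_Icc_shift {R : Type*} [CommRing R] (f : ℕ → R) (p : ℕ) :
    ∑ t ∈ Finset.Icc 1 p, f t = ∑ t ∈ Finset.range p, f (t + 1) := by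
  induction p with
  | zero => simp
  | succ p ih => rw [Finset.sum_Icc_succ_top (by omega), Finset.sum_range_succ, ih]

theorem hook_gf {R : Type*} [CommRing R] (x y : R) {h w : ℕ} (A : Fin w → Prop) (B : Fin h → Prop)
    (p q : ℕ) (hp : (∑ c, if A c then 1 else 0 : ℕ) = p)
    (hq : (∑ c, if B c then 1 else 0 : ℕ) = q) :
    (∑ t : Option Bool × (Fin w → Option Bool) × (Fin h → Option Bool),
      if hookOK A B t then x ^ (oi true t.1 + cnt true t.2.1 + cnt true t.2.2) *
        y ^ (oi false t.1 + cnt false t.2.1 + cnt false t.2.2) else 0) =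
    x ^ (p + 1) * (∑ s ∈ Finset.range (q + 1), y ^ s) +
      y ^ (q + 1) * (∑ t ∈ Finset.range (p + 1), x ^ t) +
      ∑ t ∈ Finset.Icc 1 p, ∑ s ∈ Finset.Icc 1 q, x ^ t * y ^ s := by
  obtain ⟨r1, r2⟩ := row_gf x y false w A
  obtain ⟨c1, c2⟩ := row_gf y x true h B
  rw [hp] at r1 r2
  rw [hq] at c1 c2
  have e : ∑ t ∈ Finset.Icc 1 p, ∑ s ∈ Finset.Icc 1 q, x ^ t * y ^ s =
      ((∑ t ∈ Finset.range p, x ^ t) * y) * ((∑ s ∈ Finset.range q, y ^ s) * x) := by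
    rw [sum_Icc_shift]
    simp_rw [sum_Icc_shift]
    rw [mul_mul_mul_comm, Finset.sum_mul_sum, Finset.sum_mul]
    refine Finset.sum_congr rfl fun t _ => ?_
    rw [Finset.sum_mul]
    refine Finset.sum_congr rfl fun s _ => ?_
    ring
  have e2 : x ^ (p + 1) * (∑ s ∈ Finset.range (q + 1), y ^ s) +
      y ^ (q + 1) * (∑ t ∈ Finset.range (p + 1), x ^ t) +
      ∑ t ∈ Finset.Icc 1 p, ∑ s ∈ Finset.Icc 1 q, x ^ t * y ^ s =
      ((∑ t ∈ Finset.range p, x ^ t) * y) * y ^ q +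
      ((∑ t ∈ Finset.range p, x ^ t) * y) * ((∑ s ∈ Finset.range q, y ^ s) * x) +
      x ^ p * ((∑ s ∈ Finset.range q, y ^ s) * x) + (x + y) * (x ^ p * y ^ q) := by
    rw [e, Finset.sum_range_succ, Finset.sum_range_succ]
    ring
  rw [e2, ← r1, ← r2, ← c1, ← c2]
  simp only [Finset.sum_mul_sum]
  simp only [Finset.mul_sum, ← Finset.sum_add_distrib]
  rw [Fintype.sum_prod_type, Fintype.sum_option, Fintype.sum_bool]
  simp only [Fintype.sum_prod_type, ← Finset.sum_add_distrib]
  refine Finset.sum_congr rfl fun r _ => Finset.sum_congr rfl fun s _ => ?_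
  by_cases hr : rowOK false A r
  swap
  · simp [hookOK, hr]
  by_cases hs : rowOK true B s
  swap
  · simp [hookOK, hs]
  by_cases er : ∃ c, r c = some false <;> by_cases es : ∃ c, s c = some true <;>
    simp only [hookOK, hr, hs, er, es, oi] <;> simp <;> ring

def shp {h w : ℕ} (l : Fin h → Fin (w + 1)) : Fin (h + 1) → Fin (w + 1 + 1) :=
  Fin.cons (Fin.last _) (fun i => (l i).succ)

def InnerT (h w : ℕ) (qr : (Fin h → Fin (w + 1)) × (Fin h → Fin w → Option Bool)) : Prop :=
  (∀ i j : Fin h, i ≤ j → (qr.1 j : ℕ) ≤ (qr.1 i : ℕ)) ∧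
    IsCCT h w (fun i => (qr.1 i : ℕ)) qr.2

def OuterT (h w : ℕ) (pr : (Fin (h+1) → Fin (w + 1 + 1)) ×
    (Fin (h+1) → Fin (w+1) → Option Bool)) : Prop :=
  (∀ i j : Fin (h+1), i ≤ j → (pr.1 j : ℕ) ≤ (pr.1 i : ℕ)) ∧
    (pr.1 0 : ℕ) = w + 1 ∧ (∀ i : Fin (h+1), 1 ≤ (pr.1 i : ℕ)) ∧
    IsCCT (h+1) (w+1) (fun i => (pr.1 i : ℕ)) pr.2

theorem outer_iff {h w : ℕ} (l : Fin h → Fin (w + 1)) (v : Option Bool) (r : Fin w → Option Bool)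
    (q : Fin h → Option Bool) (G : Fin h → Fin w → Option Bool) :
    OuterT h w (shp l, glue v r q G) ↔ InnerT h w (l, G) ∧ hookOK (freeC G) (freeR G) (v, r, q) := by
  unfold OuterT InnerT hookOK
  dsimp only
  rw [isCCT_glue (fun i => (shp l i : ℕ)) (fun i => (l i : ℕ)) (by simp [shp]) (by simp [shp])]
  have h1 : (∀ i j : Fin (h+1), i ≤ j → (shp l j : ℕ) ≤ (shp l i : ℕ)) ↔
      ∀ i j : Fin h, i ≤ j → (l j : ℕ) ≤ (l i : ℕ) := by
    simp only [Fin.forall_fin_succ, shp, Fin.cons_zero, Fin.cons_succ]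
    simp
    intro _ i
    have := (l i).2
    exact Fin.le_last _
  have h2 : (shp l 0 : ℕ) = w + 1 := by simp [shp]
  have h3 : ∀ i, 1 ≤ (shp l i : ℕ) := by
    intro i
    refine Fin.cases ?_ (fun i => ?_) i <;> simp [shp]
  rw [h1]
  tauto

theorem unshp {h w : ℕ} (l : Fin (h + 1) → Fin (w + 1 + 1)) (h0 : (l 0 : ℕ) = w + 1)
    (h1 : ∀ i, 1 ≤ (l i : ℕ)) :
    shp (fun i : Fin h => (⟨(l i.succ : ℕ) - 1, by omega⟩ : Fin (w+1))) = l := by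
  funext i
  refine Fin.cases ?_ (fun i => ?_) i
  · ext; simp [shp, h0]
  · ext
    have := h1 i.succ
    simp [shp]
    omega

theorem main_gen {R : Type*} [CommRing R] (x y : R) (h w : ℕ) :
    ∑ pr ∈ Finset.univ.filter (OuterT h w),
      x ^ (h + 1 + aCount (h+1) (w+1) pr.2) * y ^ (w + 1 + bCount (h+1) (w+1) pr.2) =
    ∑ qr ∈ Finset.univ.filter (InnerT h w), x ^ (h + 1) * y ^ (w + 1) *
      ((∑ t : Option Bool × (Fin w → Option Bool) × (Fin h → Option Bool),
      if hookOK (freeC qr.2) (freeR qr.2) t then x ^ (oi true t.1 + cnt true t.2.1 + cnt true t.2.2) *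
        y ^ (oi false t.1 + cnt false t.2.1 + cnt false t.2.2) else 0) *
        x ^ aCount h w qr.2 * y ^ bCount h w qr.2) := by
  have : ∑ pr ∈ Finset.univ.filter (OuterT h w),
      x ^ (h + 1 + aCount (h+1) (w+1) pr.2) * y ^ (w + 1 + bCount (h+1) (w+1) pr.2) =
    ∑ z ∈ Finset.univ.filter (fun z : ((Fin h → Fin (w + 1)) × (Fin h → Fin w → Option Bool)) ×
        (Option Bool × (Fin w → Option Bool) × (Fin h → Option Bool)) =>
        InnerT h w z.1 ∧ hookOK (freeC z.1.2) (freeR z.1.2) z.2),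
      x ^ (h + 1) * y ^ (w + 1) *
      ((x ^ (oi true z.2.1 + cnt true z.2.2.1 + cnt true z.2.2.2) *
        y ^ (oi false z.2.1 + cnt false z.2.2.1 + cnt false z.2.2.2)) *
        x ^ aCount h w z.1.2 * y ^ bCount h w z.1.2) := by
    symm
    refine Finset.sum_nbij' (fun z => (shp z.1.1, glue z.2.1 z.2.2.1 z.2.2.2 z.1.2))
      (fun pr => ((fun i => ⟨(pr.1 i.succ : ℕ) - 1, by omega⟩, fun i c => pr.2 i.succ c.succ),
        (pr.2 0 0, fun c => pr.2 0 c.succ, fun i => pr.2 i.succ 0))) ?_ ?_ ?_ ?_ ?_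
    · rintro ⟨⟨l, G⟩, v, r, q⟩ hz
      simp only [Finset.mem_filter, Finset.mem_univ, true_and] at hz ⊢
      exact (outer_iff l v r q G).2 hz
    · rintro ⟨L, F⟩ hz
      simp only [Finset.mem_filter, Finset.mem_univ, true_and] at hz ⊢
      rw [← outer_iff, unglue, unshp]
      · exact hz
      · exact hz.2.1
      · exact hz.2.2.1
    · rintro ⟨⟨l, G⟩, v, r, q⟩ hz
      simp [shp, glue]
    · rintro ⟨L, F⟩ hz
      simp only [Finset.mem_filter, Finset.mem_univ, true_and] at hz ⊢
      rw [unglue, unshp]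
      · exact hz.2.1
      · exact hz.2.2.1
    · rintro ⟨⟨l, G⟩, v, r, q⟩ hz
      dsimp only
      rw [aCount_glue, bCount_glue]
      ring
  rw [this, Finset.sum_filter, Fintype.sum_prod_type, Finset.sum_filter]
  refine Finset.sum_congr rfl fun qr _ => ?_
  split_ifs with hI
  · rw [Finset.sum_mul, Finset.sum_mul, Finset.mul_sum]
    refine Finset.sum_congr rfl fun t _ => ?_
    simp only [hI, true_and]
    split_ifs <;> simp
  · simp [hI]

/-- The hook recursion for `N'_{m,k}` (m, k ≥ 2): `N'_{m,k}(α,β)` equals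
`α^k β^m Σ_{j=0}^{m-1} Σ_{ℓ=0}^{k-1} H_{j,ℓ} · c_{j,ℓ} · α^j β^ℓ`, where `c_{j,ℓ}`
is the number of Condensed Catalan tableaux of size `(k-1, m+k-2)` (shape inside the
`(k-1) × (m-1)` rectangle) with exactly `j` α's and `ℓ` β's in the filling, and
`H_{j,ℓ}` is the generating function of the fillings of the `k–m` hook. Here
`α = X 0`, `β = X 1` in `ℤ[α,β]`. -/
theorem stmt10 (m k : ℕ) (hm : 2 ≤ m) (hk : 2 ≤ k) :
    ∑ pr ∈ Finset.univ.filter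
        (fun pr : (Fin k → Fin (m + 1)) × (Fin k → Fin m → Option Bool) =>
          (∀ i j : Fin k, i ≤ j → (pr.1 j : ℕ) ≤ (pr.1 i : ℕ)) ∧
          (pr.1 ⟨0, by omega⟩ : ℕ) = m ∧
          (∀ i : Fin k, 1 ≤ (pr.1 i : ℕ)) ∧
          IsCCT k m (fun i => (pr.1 i : ℕ)) pr.2),
        (MvPolynomial.X 0 : MvPolynomial (Fin 2) ℤ) ^ (k + aCount k m pr.2) *
          MvPolynomial.X 1 ^ (m + bCount k m pr.2)
      = MvPolynomial.X 0 ^ k * MvPolynomial.X 1 ^ m *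
        ∑ j ∈ Finset.range m, ∑ l ∈ Finset.range k,
          ((MvPolynomial.X 0 : MvPolynomial (Fin 2) ℤ) ^ (m - j) *
              (∑ s ∈ Finset.range (k - l), MvPolynomial.X 1 ^ s) +
            MvPolynomial.X 1 ^ (k - l) *
              (∑ t ∈ Finset.range (m - j), MvPolynomial.X 0 ^ t) +
            ∑ t ∈ Finset.Icc 1 (m - j - 1), ∑ s ∈ Finset.Icc 1 (k - l - 1),
              MvPolynomial.X 0 ^ t * MvPolynomial.X 1 ^ s) *
          ((Finset.univ.filter
              (fun qr : (Fin (k - 1) → Fin ((m - 1) + 1)) ×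
                  (Fin (k - 1) → Fin (m - 1) → Option Bool) =>
                (∀ i j' : Fin (k - 1), i ≤ j' → (qr.1 j' : ℕ) ≤ (qr.1 i : ℕ)) ∧
                IsCCT (k - 1) (m - 1) (fun i => (qr.1 i : ℕ)) qr.2 ∧
                aCount (k - 1) (m - 1) qr.2 = j ∧
                bCount (k - 1) (m - 1) qr.2 = l)).card : MvPolynomial (Fin 2) ℤ) *
          MvPolynomial.X 0 ^ j * MvPolynomial.X 1 ^ l := by
  obtain ⟨h, rfl⟩ : ∃ h, k = h + 1 := ⟨k - 1, by omega⟩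
  obtain ⟨w, rfl⟩ : ∃ w, m = w + 1 := ⟨m - 1, by omega⟩
  have M := main_gen (MvPolynomial.X 0 : MvPolynomial (Fin 2) ℤ) (MvPolynomial.X 1) h w
  refine Eq.trans ?_ (M.trans ?_)
  · refine Finset.sum_congr ?_ fun _ _ => rfl
    ext pr
    simp only [Finset.mem_filter, Finset.mem_univ, true_and]
    rfl
  · rw [← Finset.mul_sum]
    congr 1
    have hc0 : ∀ j l : ℕ, ((Finset.univ.filter
              (fun qr : (Fin h → Fin (w + 1)) × (Fin h → Fin w → Option Bool) =>
                (∀ i j' : Fin h, i ≤ j' → (qr.1 j' : ℕ) ≤ (qr.1 i : ℕ)) ∧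
                IsCCT h w (fun i => (qr.1 i : ℕ)) qr.2 ∧
                aCount h w qr.2 = j ∧
                bCount h w qr.2 = l)).card : MvPolynomial (Fin 2) ℤ) =
        ∑ qr ∈ Finset.univ.filter (InnerT h w),
          if bCount h w qr.2 = l then (if aCount h w qr.2 = j then 1 else 0) else 0 := by
      intro j l
      rw [Finset.card_filter, Finset.sum_filter]
      push_cast
      refine Finset.sum_congr rfl fun qr _ => ?_
      unfold InnerT
      split_ifs <;> tauto
    have hc : ∀ j l : ℕ, ((Finset.univ.filter
              (fun qr : (Fin (h + 1 - 1) → Fin (w + 1 - 1 + 1)) × (Fin (h + 1 - 1) → Fin (w + 1 - 1) → Option Bool) =>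
                (∀ i j' : Fin (h + 1 - 1), i ≤ j' → (qr.1 j' : ℕ) ≤ (qr.1 i : ℕ)) ∧
                IsCCT (h + 1 - 1) (w + 1 - 1) (fun i => (qr.1 i : ℕ)) qr.2 ∧
                aCount (h + 1 - 1) (w + 1 - 1) qr.2 = j ∧
                bCount (h + 1 - 1) (w + 1 - 1) qr.2 = l)).card : MvPolynomial (Fin 2) ℤ) =
        ∑ qr ∈ Finset.univ.filter (InnerT h w),
          if bCount h w qr.2 = l then (if aCount h w qr.2 = j then 1 else 0) else 0 := hc0
    simp only [hc, Finset.mul_sum, Finset.sum_mul]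
    simp_rw [Finset.sum_comm (t := Finset.univ.filter (InnerT h w))]
    refine Finset.sum_congr rfl fun qr hqr => ?_
    have hI := (Finset.mem_filter.1 hqr).2
    have ha := free_a hI.2
    have hb := free_b hI.2
    rw [Finset.sum_eq_single (aCount h w qr.2), Finset.sum_eq_single (bCount h w qr.2)]
    · rw [if_pos rfl, if_pos rfl, mul_one]
      have hG := hook_gf (MvPolynomial.X 0 : MvPolynomial (Fin 2) ℤ) (MvPolynomial.X 1)
        (freeC qr.2) (freeR qr.2) (w - aCount h w qr.2) (h - bCount h w qr.2)
        (by omega) (by omega)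
      have e1 : w + 1 - aCount h w qr.2 = w - aCount h w qr.2 + 1 := by omega
      have e2 : h + 1 - bCount h w qr.2 = h - bCount h w qr.2 + 1 := by omega
      rw [e1, e2, Nat.add_sub_cancel, Nat.add_sub_cancel]
      simp only [← Finset.mul_sum, ← Finset.sum_mul] at hG ⊢
      rw [hG]
    · intro l _ hl
      rw [if_neg (Ne.symm hl)]; simp
    · intro hl
      exact absurd (Finset.mem_range.2 (by omega)) hl
    · intro j _ hj
      refine Finset.sum_eq_zero fun l _ => ?_
      rw [if_neg (Ne.symm hj)]; simp
    · intro hl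
      exact absurd (Finset.mem_range.2 (by omega)) hl
end

section
/- Fix an integer n ≥ 1 and a word τ ∈ {•,∘}^n containing exactly k symbols •. There is a bijection between the set of (staircase) Catalan tableaux of size n and type τ and the set of Condensed Catalan tableaux of size (k,n) whose shape is λ(τ), where λ(τ)_j is the number of ∘'s strictly to the right of the j-th • in τ; under this bijection, the weight α^{a} β^{b} of a staircase tableau (a = total number of α's, b = total number of β's in its filling) equals the weight α^{k+j} β^{n−k+ℓ} of the corresponding condensed tableau (j = number of α's, ℓ = number of β's in the condensed filling). -/
open scoped Classical
open Finset

/-- A (staircase) Catalan tableau of size `n`: a filling of the staircase Young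
diagram `(n, n-1, …, 1)` (boxes `(i,c)` with `i + c < n`) by `none` (empty),
`some true` (α) or `some false` (β) such that: boxes outside the staircase are empty;
every diagonal box (`i + c = n - 1`) is nonempty; every box strictly west of a β in
its row is empty; every box strictly north of an α in its column is empty; and every
box with no α strictly south of it in its column and no β strictly east of it in its
row is nonempty. -/
def IsStair (n : ℕ) (G : Fin n → Fin n → Option Bool) : Prop :=
  (∀ i c : Fin n, n ≤ (i : ℕ) + (c : ℕ) → G i c = none) ∧
  (∀ i c : Fin n, (i : ℕ) + (c : ℕ) = n - 1 → G i c ≠ none) ∧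
  (∀ i c c' : Fin n, G i c = some false → c' < c → G i c' = none) ∧
  (∀ i i' c : Fin n, G i c = some true → i' < i → G i' c = none) ∧
  (∀ i c : Fin n, (i : ℕ) + (c : ℕ) < n →
    (∀ i' : Fin n, i < i' → (i' : ℕ) + (c : ℕ) < n → G i' c ≠ some true) →
    (∀ c' : Fin n, c < c' → (i : ℕ) + (c' : ℕ) < n → G i c' ≠ some false) →
    G i c ≠ none)

/-- The number of α's in a staircase filling. -/
def sACount (n : ℕ) (G : Fin n → Fin n → Option Bool) : ℕ :=
  (Finset.univ.filter fun p : Fin n × Fin n => G p.1 p.2 = some true).card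

/-- The number of β's in a staircase filling. -/
def sBCount (n : ℕ) (G : Fin n → Fin n → Option Bool) : ℕ :=
  (Finset.univ.filter fun p : Fin n × Fin n => G p.1 p.2 = some false).card

theorem aux_cases {n k w : ℕ} {τ : Fin n → Bool} {r : Fin k → Fin n} {d : Fin w → Fin n}
    (hr : ∀ i, τ i = true → ∃ j, r j = i)
    (hd : ∀ c, τ (Fin.rev c) = false → ∃ q, d q = c) (i c : Fin n) :
    c = Fin.rev i ∨ (∃ j q, r j = i ∧ d q = c) ∨
    (c ≠ Fin.rev i ∧ τ i = false) ∨ (c ≠ Fin.rev i ∧ τ (Fin.rev c) = true) := by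
  by_cases h : c = Fin.rev i
  · exact Or.inl h
  · cases h1 : τ i
    · simp [h]
    · cases h2 : τ (Fin.rev c)
      · obtain ⟨j, hj⟩ := hr i h1
        obtain ⟨q, hq⟩ := hd c h2
        exact Or.inr (Or.inl ⟨j, q, hj, hq⟩)
      · simp [h]

theorem aux_offdiag {n k w : ℕ} {τ : Fin n → Bool} {r : Fin k → Fin n} {d : Fin w → Fin n}
    (hr' : ∀ j, τ (r j) = true) (hd' : ∀ q, τ (Fin.rev (d q)) = false) (j q) :
    d q ≠ Fin.rev (r j) := by
  intro h
  have := hd' q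
  rw [h, Fin.rev_rev, hr' j] at this
  cases this

theorem aux_vanish {n : ℕ} {τ : Fin n → Bool} {G : Fin n → Fin n → Option Bool}
    (hG : IsStair n G) (hdiag : ∀ i, G i (Fin.rev i) = some (τ i)) (i c : Fin n)
    (hne : c ≠ Fin.rev i) (h : τ i = false ∨ τ (Fin.rev c) = true) : G i c = none := by
  obtain ⟨h1, h2, h3, h4, h5⟩ := hG
  have hne' : (c : ℕ) ≠ n - (i + 1) := fun h => hne (Fin.ext (by rw [Fin.val_rev]; exact h))
  by_cases hlt : n ≤ (i : ℕ) + c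
  · exact h1 i c hlt
  · rcases h with h | h
    · refine h3 i (Fin.rev i) c (by rw [hdiag, h]) ?_
      rw [Fin.lt_def, Fin.val_rev]; omega
    · refine h4 (Fin.rev c) i c ?_ ?_
      · have := hdiag (Fin.rev c)
        rwa [Fin.rev_rev, h] at this
      · rw [Fin.lt_def, Fin.val_rev]; omega

theorem aux_fwd {n k w : ℕ} {τ : Fin n → Bool} {r : Fin k → Fin n} {d : Fin w → Fin n}
    {lam : Fin k → ℕ}
    (hrm : StrictMono r) (hdm : StrictMono d)
    (hr : ∀ i, τ i = true → ∃ j, r j = i) (hr' : ∀ j, τ (r j) = true)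
    (hd : ∀ c, τ (Fin.rev c) = false → ∃ q, d q = c) (hd' : ∀ q, τ (Fin.rev (d q)) = false)
    (hlam : ∀ (j : Fin k) (q : Fin w), (q : ℕ) < lam j ↔ (r j : ℕ) + d q < n)
    {G : Fin n → Fin n → Option Bool}
    (hG : IsStair n G) (hdiag : ∀ i, G i (Fin.rev i) = some (τ i)) :
    IsCCT k w lam (fun j q => G (r j) (d q)) := by
  have hv := aux_vanish hG hdiag
  obtain ⟨h1, h2, h3, h4, h5⟩ := hG
  refine ⟨?_, ?_, ?_, ?_⟩
  · intro j q h
    apply h1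
    have := hlam j q
    omega
  · intro j q q' h hq
    exact h3 _ _ _ h (hdm hq)
  · intro j j' q h hj
    exact h4 _ _ _ h (hrm hj)
  · intro j q h ha hb
    refine h5 _ _ ((hlam j q).1 h) ?_ ?_
    · intro i' hi' _ hG'
      rcases aux_cases hr hd i' (d q) with hc | ⟨j', q', rfl, hq⟩ | ⟨hc, hc'⟩ | ⟨hc, hc'⟩
      · have h6 := hdiag i'
        have h7 := hd' q
        rw [hc, Fin.rev_rev] at h7
        rw [← hc, hG', h7] at h6
        cases h6
      · exact ha j' (hrm.lt_iff_lt.1 hi') hG'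
      · rw [hv _ _ hc (Or.inl hc')] at hG'; cases hG'
      · rw [hv _ _ hc (Or.inr hc')] at hG'; cases hG'
    · intro c' hc1 hc2 hG'
      rcases aux_cases hr hd (r j) c' with hc | ⟨j', q', hj, rfl⟩ | ⟨hc, hc'⟩ | ⟨hc, hc'⟩
      · have h6 := hdiag (r j)
        rw [← hc, hG', hr'] at h6
        cases h6
      · exact hb q' (hdm.lt_iff_lt.1 hc1) ((hlam j q').2 hc2) hG'
      · rw [hv _ _ hc (Or.inl hc')] at hG'; cases hG'
      · rw [hv _ _ hc (Or.inr hc')] at hG'; cases hG'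

theorem aux_exists {n k w : ℕ} {τ : Fin n → Bool} {r : Fin k → Fin n} {d : Fin w → Fin n}
    (hrm : StrictMono r) (hdm : StrictMono d)
    (hr' : ∀ j, τ (r j) = true) (hd' : ∀ q, τ (Fin.rev (d q)) = false)
    (F : Fin k → Fin w → Option Bool) :
    ∃ G : Fin n → Fin n → Option Bool,
      (∀ i, G i (Fin.rev i) = some (τ i)) ∧ (∀ j q, G (r j) (d q) = F j q) ∧
      (∀ i c, c ≠ Fin.rev i → (τ i = false ∨ τ (Fin.rev c) = true) → G i c = none) := by
  refine ⟨fun i c => if c = Fin.rev i then some (τ i) else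
    if h : ∃ p : Fin k × Fin w, r p.1 = i ∧ d p.2 = c then F h.choose.1 h.choose.2 else none,
    ?_, ?_, ?_⟩
  · intro i; simp
  · intro j q
    have h : ∃ p : Fin k × Fin w, r p.1 = r j ∧ d p.2 = d q := ⟨(j, q), rfl, rfl⟩
    have h1 := hrm.injective h.choose_spec.1
    have h2 := hdm.injective h.choose_spec.2
    simp only [if_neg (aux_offdiag hr' hd' j q), dif_pos h]
    rw [h1, h2]
  · intro i c hc h
    have h' : ¬ ∃ p : Fin k × Fin w, r p.1 = i ∧ d p.2 = c := by
      rintro ⟨p, rfl, rfl⟩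
      rw [hr', hd'] at h
      simp at h
    simp only [if_neg hc, dif_neg h']

theorem aux_bwd {n k w : ℕ} {τ : Fin n → Bool} {r : Fin k → Fin n} {d : Fin w → Fin n}
    {lam : Fin k → ℕ}
    (hrm : StrictMono r) (hdm : StrictMono d)
    (hr : ∀ i, τ i = true → ∃ j, r j = i) (hr' : ∀ j, τ (r j) = true)
    (hd : ∀ c, τ (Fin.rev c) = false → ∃ q, d q = c) (hd' : ∀ q, τ (Fin.rev (d q)) = false)
    (hlam : ∀ (j : Fin k) (q : Fin w), (q : ℕ) < lam j ↔ (r j : ℕ) + d q < n)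
    {F : Fin k → Fin w → Option Bool} (hF : IsCCT k w lam F)
    {G : Fin n → Fin n → Option Bool}
    (hdiag : ∀ i, G i (Fin.rev i) = some (τ i)) (hGF : ∀ j q, G (r j) (d q) = F j q)
    (hv : ∀ i c, c ≠ Fin.rev i → (τ i = false ∨ τ (Fin.rev c) = true) → G i c = none) :
    IsStair n G := by
  obtain ⟨h1, h2, h3, h4⟩ := hF
  have hout : ∀ i c : Fin n, n ≤ (i : ℕ) + (c : ℕ) → G i c = none := by
    intro i c h
    rcases aux_cases hr hd i c with hc | ⟨j, q, rfl, rfl⟩ | ⟨hc, hc'⟩ | ⟨hc, hc'⟩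
    · rw [hc, Fin.val_rev] at h; omega
    · rw [hGF]; apply h1
      have := hlam j q
      omega
    · exact hv _ _ hc (Or.inl hc')
    · exact hv _ _ hc (Or.inr hc')
  refine ⟨hout, ?_, ?_, ?_, ?_⟩
  · intro i c h
    have : c = Fin.rev i := Fin.ext (by rw [Fin.val_rev]; omega)
    rw [this, hdiag]; simp
  · intro i c c' hG hlt
    have hin : ¬ n ≤ (i : ℕ) + c := fun h => by rw [hout i c h] at hG; cases hG
    have hne : c' ≠ Fin.rev i := by
      rintro rfl
      rw [Fin.lt_def, Fin.val_rev] at hlt; omega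
    rcases aux_cases hr hd i c with hc | ⟨j, q, rfl, rfl⟩ | ⟨hc, hc'⟩ | ⟨hc, hc'⟩
    · rw [hc, hdiag] at hG
      exact hv _ _ hne (Or.inl (by simpa using hG))
    · rcases aux_cases hr hd (r j) c' with hc | ⟨j', q', hj, rfl⟩ | ⟨hc, hc'⟩ | ⟨hc, hc'⟩
      · exact absurd hc hne
      · rw [hGF] at hG ⊢
        exact h2 j q q' hG (hdm.lt_iff_lt.1 hlt)
      · exact hv _ _ hc (Or.inl hc')
      · exact hv _ _ hc (Or.inr hc')
    · rw [hv _ _ hc (Or.inl hc')] at hG; cases hG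
    · rw [hv _ _ hc (Or.inr hc')] at hG; cases hG
  · intro i i' c hG hlt
    have hin : ¬ n ≤ (i : ℕ) + c := fun h => by rw [hout i c h] at hG; cases hG
    have hne : c ≠ Fin.rev i' := by
      rintro rfl
      rw [Fin.lt_def] at hlt
      rw [Fin.val_rev] at hin; omega
    rcases aux_cases hr hd i c with hc | ⟨j, q, rfl, rfl⟩ | ⟨hc, hc'⟩ | ⟨hc, hc'⟩
    · rw [hc, hdiag] at hG
      exact hv _ _ hne (Or.inr (by rw [hc, Fin.rev_rev]; simpa using hG))
    · rcases aux_cases hr hd i' (d q) with hc | ⟨j', q', rfl, hq⟩ | ⟨hc, hc'⟩ | ⟨hc, hc'⟩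
      · exact absurd hc hne
      · rw [hGF] at hG ⊢
        exact h3 j j' q hG (hrm.lt_iff_lt.1 hlt)
      · exact hv _ _ hc (Or.inl hc')
      · exact hv _ _ hc (Or.inr hc')
    · rw [hv _ _ hc (Or.inl hc')] at hG; cases hG
    · rw [hv _ _ hc (Or.inr hc')] at hG; cases hG
  · intro i c hlt ha hb
    have hne' : c ≠ Fin.rev i → (c : ℕ) < n - (i + 1) := fun h => by
      have : (c : ℕ) ≠ n - (i + 1) := fun h' => h (Fin.ext (by rw [Fin.val_rev]; exact h'))
      omega
    rcases aux_cases hr hd i c with hc | ⟨j, q, rfl, rfl⟩ | ⟨hc, hc'⟩ | ⟨hc, hc'⟩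
    · rw [hc, hdiag]; simp
    · rw [hGF]
      refine h4 j q ((hlam j q).2 hlt) ?_ ?_
      · intro j' hj h
        rw [← hGF] at h
        refine ha (r j') (hrm hj) ?_ h
        by_contra hh
        rw [hout _ _ (not_lt.1 hh)] at h; cases h
      · intro q' hq hl h
        rw [← hGF] at h
        exact hb (d q') (hdm hq) ((hlam j q').1 hl) h
    · have := hne' hc
      refine absurd ?_ (hb (Fin.rev i) ?_ ?_)
      · rw [hdiag, hc']
      · rw [Fin.lt_def, Fin.val_rev]; omega
      · rw [Fin.val_rev]; omega
    · have := hne' hc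
      refine absurd ?_ (ha (Fin.rev c) ?_ ?_)
      · have h6 := hdiag (Fin.rev c)
        rwa [Fin.rev_rev, hc'] at h6
      · rw [Fin.lt_def, Fin.val_rev]; omega
      · rw [Fin.val_rev]; omega

theorem aux_count {n k w : ℕ} {τ : Fin n → Bool} {r : Fin k → Fin n} {d : Fin w → Fin n}
    (hrm : StrictMono r) (hdm : StrictMono d)
    (hr : ∀ i, τ i = true → ∃ j, r j = i) (hr' : ∀ j, τ (r j) = true)
    (hd : ∀ c, τ (Fin.rev c) = false → ∃ q, d q = c) (hd' : ∀ q, τ (Fin.rev (d q)) = false)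
    {G : Fin n → Fin n → Option Bool}
    (hdiag : ∀ i, G i (Fin.rev i) = some (τ i))
    (hv : ∀ i c, c ≠ Fin.rev i → (τ i = false ∨ τ (Fin.rev c) = true) → G i c = none)
    (b : Bool) :
    (Finset.univ.filter fun p : Fin n × Fin n => G p.1 p.2 = some b).card =
    (Finset.univ.filter fun p : Fin n => τ p = b).card +
    (Finset.univ.filter fun p : Fin k × Fin w => G (r p.1) (d p.2) = some b).card := by
  have h1 : (Finset.univ.filter fun p : Fin n × Fin n => G p.1 p.2 = some b) =
      (Finset.univ.filter fun p : Fin n => τ p = b).image (fun i => (i, Fin.rev i)) ∪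
      (Finset.univ.filter fun p : Fin k × Fin w => G (r p.1) (d p.2) = some b).image
        (fun p => (r p.1, d p.2)) := by
    ext ⟨i, c⟩
    simp only [mem_filter, mem_univ, true_and, mem_union, mem_image, Prod.mk.injEq, Prod.exists]
    constructor
    · intro hG
      rcases aux_cases hr hd i c with hc | ⟨j, q, rfl, rfl⟩ | ⟨hc, hc'⟩ | ⟨hc, hc'⟩
      · left
        rw [hc, hdiag] at hG
        exact ⟨i, by simpa using hG, rfl, hc.symm⟩
      · right
        exact ⟨j, q, hG, rfl, rfl⟩
      · rw [hv _ _ hc (Or.inl hc')] at hG; cases hG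
      · rw [hv _ _ hc (Or.inr hc')] at hG; cases hG
    · rintro (⟨a, h, rfl, rfl⟩ | ⟨j, q, h, rfl, rfl⟩)
      · rw [hdiag, h]
      · exact h
  rw [h1, Finset.card_union_of_disjoint, Finset.card_image_of_injective,
    Finset.card_image_of_injective]
  · rintro ⟨a, b⟩ ⟨a', b'⟩ h
    simp only [Prod.mk.injEq] at h
    rw [hrm.injective h.1, hdm.injective h.2]
  · intro a a' h
    exact (Prod.mk.inj h).1
  · rw [Finset.disjoint_left]
    intro x hx hy
    simp only [mem_filter, mem_univ, true_and, mem_image] at hx hy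
    obtain ⟨a, _, rfl⟩ := hx
    obtain ⟨p, _, hp⟩ := hy
    have := Prod.mk.inj hp
    exact aux_offdiag hr' hd' p.1 p.2 (by rw [this.1, this.2])

theorem aux_init {w : ℕ} (A : Finset (Fin w)) (hA : ∀ a b : Fin w, a ≤ b → b ∈ A → a ∈ A)
    (q : Fin w) : (q : ℕ) < A.card ↔ q ∈ A := by
  constructor
  · intro h
    by_contra hq
    have : A ⊆ Finset.Iio q := fun x hx => by
      rw [Finset.mem_Iio]
      by_contra hx'
      exact hq (hA q x (not_lt.1 hx') hx)
    have := Finset.card_le_card this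
    rw [Fin.card_Iio] at this
    omega
  · intro h
    have : Finset.Iic q ⊆ A := fun x hx => hA x q (Finset.mem_Iic.1 hx) h
    have := Finset.card_le_card this
    rw [Fin.card_Iic] at this
    omega

/-- There is a bijection between staircase Catalan tableaux of size `n` and type `τ`
(where `τ i = true` means the diagonal entry of row `i` is an α, i.e. a `•`) and
Condensed Catalan tableaux of size `(k,n)` of shape `λ(τ)`, where `λ(τ) j` is the
number of `∘`'s strictly to the right of the `j`-th `•` of `τ`; under it, the weight
`α^a β^b` of the staircase tableau equals the weight `α^(k+j) β^(n-k+ℓ)` of the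
corresponding condensed tableau. Here `α = X 0`, `β = X 1` in `ℤ[α,β]`. -/
theorem stmt13 (n k : ℕ) (hn : 1 ≤ n) (τ : Fin n → Bool)
    (hk : (Finset.univ.filter fun p => τ p = true).card = k) :
    ∃ e : {G : Fin n → Fin n → Option Bool //
            IsStair n G ∧ ∀ i : Fin n,
              G i ⟨n - 1 - (i : ℕ), by omega⟩ =
                (if τ i = true then some true else some false)} ≃
          {F : Fin k → Fin (n - k) → Option Bool //
            IsCCT k (n - k)
              (fun j => (Finset.univ.filter fun p : Fin n =>
                τ p = false ∧
                  (((Finset.univ.filter fun q => τ q = true).orderIsoOfFin hk j : Fin n)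
                    < p)).card) F},
      ∀ T, (MvPolynomial.X 0 : MvPolynomial (Fin 2) ℤ) ^ sACount n T.1 *
             MvPolynomial.X 1 ^ sBCount n T.1
          = MvPolynomial.X 0 ^ (k + aCount k (n - k) (e T).1) *
              MvPolynomial.X 1 ^ ((n - k) + bCount k (n - k) (e T).1) := by
  have hk2 : (Finset.univ.filter fun p => τ p = false).card = n - k := by
    have h := Finset.card_filter_add_card_filter_not (s := (Finset.univ : Finset (Fin n)))
      (fun p => τ p = true)
    simp only [Bool.not_eq_true, Finset.card_univ, Fintype.card_fin] at h
    omega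
  have hS : (Finset.univ.filter fun c : Fin n => τ (Fin.rev c) = false).card = n - k := by
    rw [← hk2]
    refine Finset.card_bij (fun c _ => Fin.rev c) ?_ ?_ ?_
    · intro c hc; simpa using hc
    · intro a _ b _ h; exact Fin.rev_injective h
    · intro c hc; exact ⟨Fin.rev c, by simpa using hc, Fin.rev_rev c⟩
  let r : Fin k → Fin n := fun j =>
    ((Finset.univ.filter fun q => τ q = true).orderIsoOfFin hk j : Fin n)
  let d : Fin (n - k) → Fin n := fun j =>
    ((Finset.univ.filter fun c : Fin n => τ (Fin.rev c) = false).orderIsoOfFin hS j : Fin n)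
  have hrm : StrictMono r := fun a b h =>
    ((Finset.univ.filter fun q => τ q = true).orderIsoOfFin hk).strictMono h
  have hdm : StrictMono d := fun a b h =>
    ((Finset.univ.filter fun c : Fin n => τ (Fin.rev c) = false).orderIsoOfFin hS).strictMono h
  have hr' : ∀ j, τ (r j) = true := fun j => by
    have := ((Finset.univ.filter fun q => τ q = true).orderIsoOfFin hk j).2
    exact (Finset.mem_filter.1 this).2
  have hd' : ∀ q, τ (Fin.rev (d q)) = false := fun j => by
    have := ((Finset.univ.filter fun c : Fin n => τ (Fin.rev c) = false).orderIsoOfFin hS j).2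
    exact (Finset.mem_filter.1 this).2
  have hr : ∀ i, τ i = true → ∃ j, r j = i := fun i hi => by
    obtain ⟨j, hj⟩ := ((Finset.univ.filter fun q => τ q = true).orderIsoOfFin hk).surjective
      ⟨i, by simpa using hi⟩
    exact ⟨j, congrArg Subtype.val hj⟩
  have hd : ∀ c, τ (Fin.rev c) = false → ∃ q, d q = c := fun i hi => by
    obtain ⟨j, hj⟩ := ((Finset.univ.filter fun c : Fin n =>
      τ (Fin.rev c) = false).orderIsoOfFin hS).surjective ⟨i, by simpa using hi⟩
    exact ⟨j, congrArg Subtype.val hj⟩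
  have hlam : ∀ (j : Fin k) (q : Fin (n - k)), (q : ℕ) < (Finset.univ.filter fun p : Fin n =>
                τ p = false ∧ r j < p).card ↔ (r j : ℕ) + d q < n := by
    intro j q
    have hc : (Finset.univ.filter fun p : Fin n => τ p = false ∧ r j < p).card =
        (Finset.univ.filter fun q : Fin (n - k) => r j < Fin.rev (d q)).card := by
      symm
      refine Finset.card_bij (fun q _ => Fin.rev (d q)) ?_ ?_ ?_
      · intro a ha
        have := hd' a
        simp_all
      · intro a _ b _ h; exact hdm.injective (Fin.rev_injective h)
      · intro p hp
        simp only [mem_filter, mem_univ, true_and] at hp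
        obtain ⟨q, hq⟩ := hd (Fin.rev p) (by rw [Fin.rev_rev]; exact hp.1)
        exact ⟨q, by simp [hq, hp.2], by simp [hq]⟩
    rw [hc, aux_init]
    · simp only [mem_filter, mem_univ, true_and]
      have h := aux_offdiag hr' hd' j q
      have h' : (d q : ℕ) ≠ n - (r j + 1) := fun h' => h (Fin.ext (by rw [Fin.val_rev]; exact h'))
      rw [Fin.lt_def, Fin.val_rev]
      omega
    · intro a b hab hb
      simp only [mem_filter, mem_univ, true_and] at hb ⊢
      exact hb.trans_le (Fin.rev_le_rev.2 (hdm.monotone hab))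
  have hrev : ∀ i : Fin n, (⟨n - 1 - (i : ℕ), by omega⟩ : Fin n) = Fin.rev i := fun i =>
    Fin.ext (by rw [Fin.val_rev]; simp only; omega)
  have hif : ∀ i : Fin n, (if τ i = true then some true else some false) = some (τ i) := by
    intro i; cases τ i <;> rfl
  have hD : ∀ G : Fin n → Fin n → Option Bool, (∀ i : Fin n,
      G i ⟨n - 1 - (i : ℕ), by omega⟩ = (if τ i = true then some true else some false)) ↔
      ∀ i, G i (Fin.rev i) = some (τ i) := by
    intro G
    simp only [hrev, hif]
  refine ⟨Equiv.ofBijective (fun G => ⟨fun j q => G.1 (r j) (d q),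
    aux_fwd hrm hdm hr hr' hd hd' hlam G.2.1 ((hD _).1 G.2.2)⟩) ⟨?_, ?_⟩, ?_⟩
  · rintro ⟨G, hG, hGd⟩ ⟨G', hG', hGd'⟩ h
    have h0 := congrArg Subtype.val h
    simp only at h0
    rw [hD] at hGd hGd'
    apply Subtype.ext
    funext i c
    show G i c = G' i c
    rcases aux_cases hr hd i c with hc | ⟨j, q, rfl, rfl⟩ | ⟨hc, hc'⟩ | ⟨hc, hc'⟩
    · rw [hc, hGd, hGd']
    · exact congrFun (congrFun h0 j) q
    · rw [aux_vanish hG hGd _ _ hc (Or.inl hc'), aux_vanish hG' hGd' _ _ hc (Or.inl hc')]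
    · rw [aux_vanish hG hGd _ _ hc (Or.inr hc'), aux_vanish hG' hGd' _ _ hc (Or.inr hc')]
  · rintro ⟨F, hF⟩
    obtain ⟨G, hdiag, hGF, hv⟩ := aux_exists hrm hdm hr' hd' F
    refine ⟨⟨G, aux_bwd hrm hdm hr hr' hd hd' hlam hF hdiag hGF hv, (hD _).2 hdiag⟩, ?_⟩
    apply Subtype.ext
    funext j q
    exact hGF j q
  · rintro ⟨G, hG, hGd⟩
    rw [hD] at hGd
    have hc := aux_count hrm hdm hr hr' hd hd' hGd (aux_vanish hG hGd)
    have ha := hc true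
    have hb := hc false
    rw [hk] at ha
    rw [hk2] at hb
    show _ ^ sACount n G * _ ^ sBCount n G = _ ^ (k + aCount k (n - k) (fun j q => G (r j) (d q))) *
      _ ^ ((n - k) + bCount k (n - k) (fun j q => G (r j) (d q)))
    unfold sACount sBCount aCount bCount
    rw [ha, hb]
end

section
/- (Corteel–Williams, stationarity form) Fix an integer n ≥ 1 and real numbers α > 0, β > 0. For a word τ ∈ {0,1}^n (1 = particle, 0 = hole) with k ones, let P(τ) be the sum, over all Condensed Catalan tableaux T of size (k,n) and shape λ(τ) (where λ(τ)_j is the number of 0's strictly to the right of the j-th 1 in τ), of α^{k+j(T)} β^{n−k+ℓ(T)}, where j(T) and ℓ(T) are the numbers of α's and β's in the filling of T. Then P is a stationary measure for the TASEP: for every state σ ∈ {0,1}^n, Σ_{τ ∈ {0,1}^n, τ ≠ σ} r(τ, σ) P(τ) = P(σ) · Σ_{τ' ∈ {0,1}^n, τ' ≠ σ} r(σ, τ'), where the transition rate r is defined by: r(τ, τ') = α if τ_1 = 0 and τ' is obtained from τ by setting site 1 to 1; r(τ, τ') = β if τ_n = 1 and τ' is obtained from τ by setting site n to 0; r(τ,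 τ') = 1 if for some 1 ≤ i ≤ n−1, (τ_i, τ_{i+1}) = (1,0) and τ' is obtained from τ by swapping sites i and i+1; and r(τ, τ') = 0 otherwise. -/
open scoped Classical
open Finset

/-- The transition rate of the open-boundary TASEP on `n` sites from state `σ` to
state `τ` (`true` = particle, `false` = hole): rate `a = α` for a particle entering at
site `1` (when empty), rate `b = β` for the particle at site `n` exiting, rate `1` for
a particle hopping right to an empty neighbouring site, and `0` otherwise (the three
cases are mutually exclusive). -/
noncomputable def tasepRate (n : ℕ) (a b : ℝ) (σ τ : Fin n → Bool) : ℝ :=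
  (if ∃ h : 0 < n, σ ⟨0, h⟩ = false ∧ τ = Function.update σ ⟨0, h⟩ true then a else 0) +
  (if ∃ h : 0 < n, σ ⟨n - 1, Nat.sub_lt h Nat.one_pos⟩ = true ∧
      τ = Function.update σ ⟨n - 1, Nat.sub_lt h Nat.one_pos⟩ false then b else 0) +
  (if ∃ i : Fin n, ∃ h : (i : ℕ) + 1 < n, σ i = true ∧ σ ⟨(i : ℕ) + 1, h⟩ = false ∧
      τ = Function.update (Function.update σ i false) ⟨(i : ℕ) + 1, h⟩ true then 1 else 0)

/-- `P(τ)`: the sum over all Condensed Catalan tableaux of size `(k,n)` and shape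
`λ(τ)` (where `k` is the number of particles of `τ` and `λ(τ) j` is the number of
holes strictly to the right of the `j`-th particle) of `a^(k+j) b^(n-k+ℓ)`, where
`j, ℓ` are the numbers of α's and β's in the filling. -/
noncomputable def statWeight (n : ℕ) (a b : ℝ) (τ : Fin n → Bool) : ℝ :=
  ∑ F ∈ Finset.univ.filter
      (IsCCT ((Finset.univ.filter fun p => τ p = true).card)
        (n - (Finset.univ.filter fun p => τ p = true).card)
        (fun j => (Finset.univ.filter fun p : Fin n =>
          τ p = false ∧
            (((Finset.univ.filter fun q => τ q = true).orderIsoOfFin rfl j : Fin n)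
              < p)).card)),
    a ^ ((Finset.univ.filter fun p => τ p = true).card +
          aCount ((Finset.univ.filter fun p => τ p = true).card)
            (n - (Finset.univ.filter fun p => τ p = true).card) F) *
      b ^ ((n - (Finset.univ.filter fun p => τ p = true).card) +
          bCount ((Finset.univ.filter fun p => τ p = true).card)
            (n - (Finset.univ.filter fun p => τ p = true).card) F)

/-- Position-indexed tableaux. -/
def PT {n : ℕ} (τ : Fin n → Bool) (G : Fin n → Fin n → Option Bool) : Prop :=
  (∀ p q, ¬(τ p = true ∧ τ q = false ∧ p < q) → G p q = none) ∧
  (∀ p q q', G p q = some false → q < q' → G p q' = none) ∧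
  (∀ p p' q, G p q = some true → p' < p → G p' q = none) ∧
  (∀ p q, τ p = true → τ q = false → p < q → (∀ p', p < p' → G p' q ≠ some true) →
    (∀ q', q' < q → G p q' ≠ some false) → G p q ≠ none)

/-- weight of a cell -/
def cw (a b : ℝ) : Option Bool → ℝ
  | none => 1
  | some true => a
  | some false => b

/-- weight of a letter -/
def lw (a b : ℝ) : Bool → ℝ
  | true => a
  | false => b

noncomputable def PW {n : ℕ} (a b : ℝ) (τ : Fin n → Bool) : ℝ :=
  ∑ G ∈ Finset.univ.filter (fun G : Fin n → Fin n → Option Bool => PT τ G),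
    (∏ p, lw a b (τ p)) * ∏ p, ∏ q, cw a b (G p q)

def ins {n : ℕ} (j : Fin (n+1)) (r : Fin (n+1) → Option Bool) (c : Fin n → Option Bool)
    (G : Fin n → Fin n → Option Bool) : Fin (n+1) → Fin (n+1) → Option Bool :=
  Fin.insertNth (α := fun _ => Fin (n+1) → Option Bool) j r
    (fun p => Fin.insertNth (α := fun _ => Option Bool) j (c p) (G p))

lemma ins_row {n : ℕ} (j : Fin (n+1)) (r : Fin (n+1) → Option Bool) (c : Fin n → Option Bool)
    (G : Fin n → Fin n → Option Bool) : ins j r c G j = r := by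
  simp [ins]

lemma ins_col {n : ℕ} (j : Fin (n+1)) (r : Fin (n+1) → Option Bool) (c : Fin n → Option Bool)
    (G : Fin n → Fin n → Option Bool) (p : Fin n) : ins j r c G (j.succAbove p) j = c p := by
  simp [ins]

lemma ins_in {n : ℕ} (j : Fin (n+1)) (r : Fin (n+1) → Option Bool) (c : Fin n → Option Bool)
    (G : Fin n → Fin n → Option Bool) (p q : Fin n) :
    ins j r c G (j.succAbove p) (j.succAbove q) = G p q := by
  simp [ins]

lemma PW_del {n : ℕ} (a b : ℝ) (τ : Fin (n+1) → Bool) (j : Fin (n+1))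
    (r : Fin (n+1) → Option Bool) (c : Fin n → Option Bool)
    (Q : (Fin (n+1) → Fin (n+1) → Option Bool) → Prop)
    (h1 : ∀ G, PT (fun p => τ (j.succAbove p)) G → PT τ (ins j r c G) ∧ Q (ins j r c G))
    (h2 : ∀ G, PT τ G → Q G → PT (fun p => τ (j.succAbove p))
        (fun p q => G (j.succAbove p) (j.succAbove q)) ∧
        (∀ q, G j q = r q) ∧ (∀ p, G (j.succAbove p) j = c p)) :
    ∑ G ∈ Finset.univ.filter (fun G : Fin (n+1) → Fin (n+1) → Option Bool => PT τ G ∧ Q G),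
      (∏ p, lw a b (τ p)) * ∏ p, ∏ q, cw a b (G p q)
    = (lw a b (τ j) * ((∏ q, cw a b (r q)) * ∏ p, cw a b (c p))) *
        PW a b (fun p => τ (j.succAbove p)) := by
  rw [PW, Finset.mul_sum]
  symm
  refine Finset.sum_nbij' (fun G => ins j r c G)
    (fun G p q => G (j.succAbove p) (j.succAbove q)) ?_ ?_ ?_ ?_ ?_
  · intro G hG
    simp only [Finset.mem_filter, Finset.mem_univ, true_and] at hG ⊢
    exact h1 G hG
  · intro G hG
    simp only [Finset.mem_filter, Finset.mem_univ, true_and] at hG ⊢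
    exact (h2 G hG.1 hG.2).1
  · intro G hG
    funext p q
    exact ins_in ..
  · intro G hG
    simp only [Finset.mem_filter, Finset.mem_univ, true_and] at hG
    obtain ⟨-, h3, h4⟩ := h2 G hG.1 hG.2
    funext p q
    rcases Fin.eq_self_or_eq_succAbove j p with rfl | ⟨p, rfl⟩
    · rw [ins_row, h3]
    · rcases Fin.eq_self_or_eq_succAbove j q with rfl | ⟨q, rfl⟩
      · rw [ins_col, h4]
      · rw [ins_in]
  · intro G hG
    rw [Fin.prod_univ_succAbove (fun p => lw a b (τ p)) j,
      Fin.prod_univ_succAbove (fun p => ∏ q, cw a b (ins j r c G p q)) j]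
    have : ∀ p, ∏ q, cw a b (ins j r c G (j.succAbove p) q) = cw a b (c p) * ∏ q, cw a b (G p q) := by
      intro p
      rw [Fin.prod_univ_succAbove _ j, ins_col]
      simp only [ins_in]
    simp only [this, ins_row, Finset.prod_mul_distrib]
    ring

lemma PW_first {n : ℕ} (a b : ℝ) (τ : Fin (n+1) → Bool) (h : τ 0 = false) :
    PW a b τ = b * PW a b (fun p => τ ((0 : Fin (n+1)).succAbove p)) := by
  have := PW_del a b τ 0 (fun _ => none) (fun _ => none) (fun _ => True) ?_ ?_
  · simpa [cw, h, lw, PW] using this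
  · intro G ⟨g1, g2, g3, g4⟩
    refine ⟨⟨?_, ?_, ?_, ?_⟩, trivial⟩ <;>
    simp only [Fin.forall_iff_succAbove (0 : Fin (n+1)), ins_row, ins_col, ins_in, Fin.succAbove_lt_succAbove_iff]
    all_goals grind
  · intro G ⟨g1, g2, g3, g4⟩ _
    refine ⟨⟨?_, ?_, ?_, ?_⟩, ?_, ?_⟩
    all_goals simp only [Fin.forall_iff_succAbove (0 : Fin (n+1)), Fin.succAbove_lt_succAbove_iff] at *
    all_goals grind

lemma PW_last {n : ℕ} (a b : ℝ) (τ : Fin (n+1) → Bool) (h : τ (Fin.last n) = true) :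
    PW a b τ = a * PW a b (fun p => τ ((Fin.last n).succAbove p)) := by
  have := PW_del a b τ (Fin.last n) (fun _ => none) (fun _ => none) (fun _ => True) ?_ ?_
  · simpa [cw, h, lw, PW] using this
  · intro G ⟨g1, g2, g3, g4⟩
    have hl : ∀ q, ¬ Fin.last n < q := fun q => not_lt.2 (Fin.le_last q)
    refine ⟨⟨?_, ?_, ?_, ?_⟩, trivial⟩ <;>
    simp only [Fin.forall_iff_succAbove (Fin.last n), ins_row, ins_col, ins_in, Fin.succAbove_lt_succAbove_iff]
    all_goals grind
  · intro G ⟨g1, g2, g3, g4⟩ _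
    have hl : ∀ q, ¬ Fin.last n < q := fun q => not_lt.2 (Fin.le_last q)
    refine ⟨⟨?_, ?_, ?_, ?_⟩, ?_, ?_⟩
    all_goals simp only [Fin.forall_iff_succAbove (Fin.last n), Fin.succAbove_lt_succAbove_iff] at *
    all_goals grind

lemma PW_mid_a {n : ℕ} (a b : ℝ) (τ : Fin (n+1) → Bool) (i : Fin n)
    (hi : τ i.castSucc = true) (hj : τ i.succ = false) :
    ∑ G ∈ Finset.univ.filter (fun G : Fin (n+1) → Fin (n+1) → Option Bool =>
        PT τ G ∧ G i.castSucc i.succ = some true),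
      (∏ p, lw a b (τ p)) * ∏ p, ∏ q, cw a b (G p q)
    = a * b * PW a b (fun p => τ (i.succ.succAbove p)) := by
  have hs : i.succ.succAbove i = i.castSucc := Fin.succAbove_succ_self i
  have := PW_del a b τ i.succ (fun _ => none) (fun p => if p = i then some true else none)
    (fun G => G i.castSucc i.succ = some true) ?_ ?_
  · refine (Eq.trans ?_ this).trans ?_
    · congr!
    rw [hj]
    have : ∏ p, cw a b (if p = i then some true else none) = a := by
      rw [Finset.prod_eq_single i] <;> simp +contextual [cw]
    rw [this]; simp only [lw, cw, Finset.prod_const_one]; ring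
  · intro G ⟨g1, g2, g3, g4⟩
    have k1 : ∀ p, i.succ.succAbove p < i.succ ↔ p ≤ i := by
      intro p; rw [Fin.succAbove_lt_iff_castSucc_lt]; simp only [Fin.lt_def, Fin.le_def, Fin.val_castSucc, Fin.val_succ]; omega
    have k2 : ∀ p, i.succ < i.succ.succAbove p ↔ i < p := by
      intro p; rw [Fin.lt_succAbove_iff_lt_castSucc]; simp only [Fin.lt_def, Fin.val_castSucc, Fin.val_succ]; omega
    rw [← hs] at hi ⊢
    refine ⟨⟨?_, ?_, ?_, ?_⟩, ?_⟩ <;>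
    simp only [Fin.forall_iff_succAbove i.succ, ins_row, ins_col, ins_in, Fin.succAbove_lt_succAbove_iff, k1, k2]
    all_goals grind
  · intro G ⟨g1, g2, g3, g4⟩ hG
    have k1 : ∀ p, i.succ.succAbove p < i.succ ↔ p ≤ i := by
      intro p; rw [Fin.succAbove_lt_iff_castSucc_lt]; simp only [Fin.lt_def, Fin.le_def, Fin.val_castSucc, Fin.val_succ]; omega
    have k2 : ∀ p, i.succ < i.succ.succAbove p ↔ i < p := by
      intro p; rw [Fin.lt_succAbove_iff_lt_castSucc]; simp only [Fin.lt_def, Fin.val_castSucc, Fin.val_succ]; omega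
    rw [← hs] at hi hG
    refine ⟨⟨?_, ?_, ?_, ?_⟩, ?_, ?_⟩
    all_goals simp only [Fin.forall_iff_succAbove i.succ, Fin.succAbove_lt_succAbove_iff, k1, k2] at *
    all_goals grind

lemma PW_mid_b {n : ℕ} (a b : ℝ) (τ : Fin (n+1) → Bool) (i : Fin n)
    (hi : τ i.castSucc = true) (hj : τ i.succ = false) :
    ∑ G ∈ Finset.univ.filter (fun G : Fin (n+1) → Fin (n+1) → Option Bool =>
        PT τ G ∧ G i.castSucc i.succ = some false),
      (∏ p, lw a b (τ p)) * ∏ p, ∏ q, cw a b (G p q)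
    = a * b * PW a b (fun p => τ (i.castSucc.succAbove p)) := by
  have hs : i.castSucc.succAbove i = i.succ := Fin.succAbove_castSucc_self i
  have := PW_del a b τ i.castSucc (fun q => if q = i.succ then some false else none) (fun p => none)
    (fun G => G i.castSucc i.succ = some false) ?_ ?_
  · refine (Eq.trans ?_ this).trans ?_
    · congr!
    rw [hi]
    have : ∏ p, cw a b (if p = i.succ then some false else none) = b := by
      rw [Finset.prod_eq_single i.succ] <;> simp +contextual [cw]
    rw [this]; simp [lw, cw]
  · intro G ⟨g1, g2, g3, g4⟩
    have k1 : ∀ p, i.castSucc.succAbove p < i.castSucc ↔ p < i := by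
      intro p; rw [Fin.succAbove_lt_iff_castSucc_lt]; simp only [Fin.lt_def, Fin.val_castSucc]
    have k2 : ∀ p, i.castSucc < i.castSucc.succAbove p ↔ i ≤ p := by
      intro p; rw [Fin.lt_succAbove_iff_le_castSucc]; simp only [Fin.le_def, Fin.val_castSucc]
    have k3 : i.castSucc ≠ i.castSucc.succAbove i := (Fin.succAbove_ne _ _).symm
    have k4 : ∀ p, i.castSucc.succAbove p = i.castSucc.succAbove i ↔ p = i := fun p => Fin.succAbove_right_inj
    rw [← hs] at hj ⊢
    refine ⟨⟨?_, ?_, ?_, ?_⟩, ?_⟩ <;>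
    simp only [Fin.forall_iff_succAbove i.castSucc, ins_row, ins_col, ins_in, Fin.succAbove_lt_succAbove_iff, k1, k2, k3, k4]
    all_goals grind
  · intro G ⟨g1, g2, g3, g4⟩ hG
    have k1 : ∀ p, i.castSucc.succAbove p < i.castSucc ↔ p < i := by
      intro p; rw [Fin.succAbove_lt_iff_castSucc_lt]; simp only [Fin.lt_def, Fin.val_castSucc]
    have k2 : ∀ p, i.castSucc < i.castSucc.succAbove p ↔ i ≤ p := by
      intro p; rw [Fin.lt_succAbove_iff_le_castSucc]; simp only [Fin.le_def, Fin.val_castSucc]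
    have k3 : i.castSucc ≠ i.castSucc.succAbove i := (Fin.succAbove_ne _ _).symm
    have k4 : ∀ p, i.castSucc.succAbove p = i.castSucc.succAbove i ↔ p = i := fun p => Fin.succAbove_right_inj
    rw [← hs] at hj hG ⊢
    refine ⟨⟨?_, ?_, ?_, ?_⟩, ?_, ?_⟩
    all_goals simp only [Fin.forall_iff_succAbove i.castSucc, Fin.succAbove_lt_succAbove_iff, k1, k2, k4] at *
    all_goals grind

lemma PW_mid {n : ℕ} (a b : ℝ) (τ : Fin (n+1) → Bool) (i : Fin n)
    (hi : τ i.castSucc = true) (hj : τ i.succ = false) :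
    PW a b τ = a * b * (PW a b (fun p => τ (i.castSucc.succAbove p))
      + PW a b (fun p => τ (i.succ.succAbove p))) := by
  rw [mul_add, ← PW_mid_a a b τ i hi hj, ← PW_mid_b a b τ i hi hj, add_comm (Finset.sum _ _), PW,
    ← Finset.sum_union]
  · apply Finset.sum_congr _ (fun _ _ => rfl)
    ext G
    simp only [Finset.mem_filter, Finset.mem_univ, true_and, Finset.mem_union]
    constructor
    · intro h
      have : G i.castSucc i.succ ≠ none := by
        obtain ⟨g1, g2, g3, g4⟩ := h
        apply g4 _ _ hi hj (by simp only [Fin.lt_def, Fin.val_castSucc, Fin.val_succ]; omega)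
        · intro p' hp'
          rw [g1 p' _ (by simp only [Fin.lt_def, Fin.val_castSucc, Fin.val_succ] at *; omega)]
          simp
        · intro p' hp'
          rw [g1 _ p' (by simp only [Fin.lt_def, Fin.val_castSucc, Fin.val_succ] at *; omega)]
          simp
      rcases hh : G i.castSucc i.succ with _ | _ | _ <;> simp_all
    · tauto
  · rw [Finset.disjoint_left]
    intro G h1 h2
    simp only [Finset.mem_filter, Finset.mem_univ, true_and] at h1 h2
    rw [h1.2] at h2
    simp at h2

lemma downset_card {w : ℕ} (D : Finset (Fin w)) (hD : ∀ c c', c ∈ D → c' < c → c' ∈ D)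
    (c : Fin w) : (c : ℕ) < D.card ↔ c ∈ D := by
  constructor
  · intro h
    by_contra hc
    have : D ⊆ Finset.Iio c := by
      intro d hd
      rw [Finset.mem_Iio]
      by_contra hdc
      rcases eq_or_lt_of_le (not_lt.1 hdc) with h' | h'
      · exact hc (h' ▸ hd)
      · exact hc (hD _ _ hd h')
    have := Finset.card_le_card this
    rw [Fin.card_Iio] at this
    omega
  · intro h
    have : Finset.Iic c ⊆ D := by
      intro d hd
      rcases eq_or_lt_of_le (Finset.mem_Iic.1 hd) with h' | h'
      · exact h' ▸ h
      · exact hD _ _ h h'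
    have := Finset.card_le_card this
    rw [Fin.card_Iic] at this
    omega

lemma cw_prod {k w : ℕ} (a b : ℝ) (F : Fin k → Fin w → Option Bool) :
    a ^ aCount k w F * b ^ bCount k w F = ∏ i, ∏ c, cw a b (F i c) := by
  rw [aCount, bCount, ← Finset.prod_const, ← Finset.prod_const, Finset.prod_filter,
    Finset.prod_filter, ← Finset.prod_mul_distrib, Fintype.prod_prod_type]
  refine Finset.prod_congr rfl fun i _ => Finset.prod_congr rfl fun c _ => ?_
  dsimp only
  rcases F i c with _ | _ | _ <;> simp [cw]

lemma sum_F_G {n k w : ℕ} (a b : ℝ) (τ : Fin n → Bool) (e : Fin k → Fin n) (f : Fin w → Fin n)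
    (he : StrictMono e) (hf : StrictAnti f) (he' : ∀ p, τ p = true ↔ ∃ i, e i = p)
    (hf' : ∀ p, τ p = false ↔ ∃ i, f i = p) (lam : Fin k → ℕ)
    (hlam : ∀ (i : Fin k) (c : Fin w), (c : ℕ) < lam i ↔ e i < f c) :
    ∑ F ∈ Finset.univ.filter (IsCCT k w lam), ∏ i, ∏ c, cw a b (F i c)
    = ∑ G ∈ Finset.univ.filter (fun G : Fin n → Fin n → Option Bool => PT τ G),
      ∏ p, ∏ q, cw a b (G p q) := by
  symm
  have te : ∀ i, τ (e i) = true := fun i => (he' _).2 ⟨i, rfl⟩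
  have tf : ∀ i, τ (f i) = false := fun i => (hf' _).2 ⟨i, rfl⟩
  refine Finset.sum_bij (fun G _ i c => G (e i) (f c)) ?_ ?_ ?_ ?_
  · intro G hG
    simp only [Finset.mem_filter, Finset.mem_univ, true_and] at hG ⊢
    obtain ⟨g1, g2, g3, g4⟩ := hG
    refine ⟨?_, ?_, ?_, ?_⟩
    · intro i c h
      apply g1
      rw [← not_lt, hlam] at h
      tauto
    · intro i c c' h h'
      exact g2 _ _ _ h (hf h')
    · intro i c c' h h'
      exact g3 _ _ _ h (he h')
    · intro i c h h1 h2
      apply g4 _ _ (te i) (tf c) ((hlam _ _).1 h)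
      · intro p' hp' h3
        by_cases hp : τ p' = true
        · obtain ⟨i', rfl⟩ := (he' _).1 hp
          exact h1 i' (he.lt_iff_lt.1 hp') h3
        · rw [g1 _ _ (by tauto)] at h3; simp at h3
      · intro p' hp' h3
        by_cases hp : τ p' = false ∧ e i < p'
        · obtain ⟨i', rfl⟩ := (hf' _).1 hp.1
          exact h2 i' (hf.lt_iff_gt.1 hp') ((hlam _ _).2 hp.2) h3
        · rw [g1 _ _ (by tauto)] at h3; simp at h3
  · intro G hG G' hG' h
    simp only [Finset.mem_filter, Finset.mem_univ, true_and] at hG hG'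
    funext p q
    by_cases hp : τ p = true ∧ τ q = false
    · obtain ⟨i, rfl⟩ := (he' _).1 hp.1
      obtain ⟨c, rfl⟩ := (hf' _).1 hp.2
      exact congrFun (congrFun h i) c
    · rw [hG.1 _ _ (by tauto), hG'.1 _ _ (by tauto)]
  · intro F hF
    simp only [Finset.mem_filter, Finset.mem_univ, true_and] at hF
    let G : Fin n → Fin n → Option Bool := fun p q =>
      if h : (∃ i, e i = p) ∧ (∃ c, f c = q) then F h.1.choose h.2.choose else none
    have hG : ∀ i c, G (e i) (f c) = F i c := by
      intro i c
      have h : (∃ i', e i' = e i) ∧ (∃ c', f c' = f c) := ⟨⟨i, rfl⟩, ⟨c, rfl⟩⟩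
      simp only [G]
      rw [dif_pos h, he.injective h.1.choose_spec, hf.injective h.2.choose_spec]
    have hG0 : ∀ p q, ¬ (τ p = true ∧ τ q = false) → G p q = none := by
      intro p q h
      rw [he', hf'] at h
      simp only [G]
      rw [dif_neg h]
    have key : ∀ p q x, G p q = some x → ∃ i c, p = e i ∧ q = f c := by
      intro p q x hx
      by_cases h : τ p = true ∧ τ q = false
      · obtain ⟨i, rfl⟩ := (he' _).1 h.1
        obtain ⟨c, rfl⟩ := (hf' _).1 h.2
        exact ⟨i, c, rfl, rfl⟩
      · rw [hG0 _ _ h] at hx; simp at hx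
    refine ⟨G, ?_, ?_⟩
    · simp only [Finset.mem_filter, Finset.mem_univ, true_and]
      obtain ⟨g1, g2, g3, g4⟩ := hF
      refine ⟨?_, ?_, ?_, ?_⟩
      · intro p q h
        by_cases h' : τ p = true ∧ τ q = false
        · obtain ⟨i, rfl⟩ := (he' _).1 h'.1
          obtain ⟨c, rfl⟩ := (hf' _).1 h'.2
          rw [hG]
          apply g1
          rw [← not_lt, hlam]
          tauto
        · exact hG0 _ _ h'
      · intro p q q' h h'
        obtain ⟨i, c, rfl, rfl⟩ := key _ _ _ h
        by_cases hq : τ q' = false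
        · obtain ⟨c', rfl⟩ := (hf' _).1 hq
          rw [hG] at *
          exact g2 _ _ _ h (hf.lt_iff_gt.1 h')
        · exact hG0 _ _ (by tauto)
      · intro p q q' h h'
        obtain ⟨i, c, rfl, rfl⟩ := key _ _ _ h
        by_cases hq : τ q = true
        · obtain ⟨c', rfl⟩ := (he' _).1 hq
          rw [hG] at *
          exact g3 _ _ _ h (he.lt_iff_lt.1 h')
        · exact hG0 _ _ (by tauto)
      · intro p q hp hq hpq h1 h2
        obtain ⟨i, rfl⟩ := (he' _).1 hp
        obtain ⟨c, rfl⟩ := (hf' _).1 hq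
        rw [hG]
        apply g4 _ _ ((hlam _ _).2 hpq)
        · intro i' hi'
          rw [← hG]
          exact h1 _ (he hi')
        · intro i' hi' _
          rw [← hG]
          exact h2 _ (hf hi')
    · funext i c
      exact hG i c
  · intro G hG
    simp only [Finset.mem_filter, Finset.mem_univ, true_and] at hG
    have r1 : ∀ p ∉ Set.range e, ∏ q, cw a b (G p q) = 1 := by
      intro p hp
      refine Finset.prod_eq_one fun q _ => ?_
      rw [hG.1, cw]
      rintro ⟨h, -⟩
      exact hp ((he' _).1 h)
    have r2 : ∀ p, ∀ q ∉ Set.range f, cw a b (G p q) = 1 := by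
      intro p q hq
      rw [hG.1, cw]
      rintro ⟨-, h, -⟩
      exact hq ((hf' _).1 h)
    rw [← Fintype.prod_of_injective e he.injective _ _ r1 (fun _ => rfl)]
    refine Finset.prod_congr rfl fun i _ => ?_
    rw [← Fintype.prod_of_injective f hf.injective _ _ (r2 _) (fun _ => rfl)]

lemma statWeight_eq {n : ℕ} (a b : ℝ) (τ : Fin n → Bool) :
    statWeight n a b τ = PW a b τ := by
  have hz : (Finset.univ.filter fun p => τ p = false).card
      = n - (Finset.univ.filter fun p => τ p = true).card := by
    have := Finset.card_filter_add_card_filter_not (s := (Finset.univ : Finset (Fin n))) (fun p => τ p = true)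
    simp only [Finset.card_univ, Fintype.card_fin, Bool.not_eq_true] at this
    omega
  have hprod : ∏ p, lw a b (τ p) = a ^ (Finset.univ.filter fun p => τ p = true).card *
      b ^ (n - (Finset.univ.filter fun p => τ p = true).card) := by
    rw [← hz, ← Finset.prod_const, ← Finset.prod_const, Finset.prod_filter,
      Finset.prod_filter, ← Finset.prod_mul_distrib]
    refine Finset.prod_congr rfl fun p _ => ?_
    rcases τ p <;> simp [lw]
  rw [PW, ← Finset.mul_sum, hprod]
  let e : Fin (Finset.univ.filter fun p => τ p = true).card → Fin n :=
    fun j => ((Finset.univ.filter fun q => τ q = true).orderIsoOfFin rfl j : Fin n)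
  let f : Fin (n - (Finset.univ.filter fun p => τ p = true).card) → Fin n :=
    fun j => ((Finset.univ.filter fun q => τ q = false).orderIsoOfFin hz (Fin.rev j) : Fin n)
  have he : StrictMono e := by
    intro i j h
    exact ((Finset.univ.filter fun q => τ q = true).orderIsoOfFin rfl).strictMono h
  have hf : StrictAnti f := by
    intro i j h
    exact ((Finset.univ.filter fun q => τ q = false).orderIsoOfFin hz).strictMono (Fin.rev_lt_rev.2 h)
  have he' : ∀ p, τ p = true ↔ ∃ i, e i = p := by
    intro p
    constructor
    · intro h
      refine ⟨((Finset.univ.filter fun q => τ q = true).orderIsoOfFin rfl).symm ⟨p, by simp [h]⟩, ?_⟩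
      simp only [e, OrderIso.apply_symm_apply]
    · rintro ⟨i, rfl⟩
      have := ((Finset.univ.filter fun q => τ q = true).orderIsoOfFin rfl i).2
      exact (Finset.mem_filter.1 this).2
  have hf' : ∀ p, τ p = false ↔ ∃ i, f i = p := by
    intro p
    constructor
    · intro h
      refine ⟨Fin.rev (((Finset.univ.filter fun q => τ q = false).orderIsoOfFin hz).symm ⟨p, by simp [h]⟩), ?_⟩
      simp only [f, Fin.rev_rev, OrderIso.apply_symm_apply]
    · rintro ⟨i, rfl⟩
      have := ((Finset.univ.filter fun q => τ q = false).orderIsoOfFin hz (Fin.rev i)).2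
      exact (Finset.mem_filter.1 this).2
  rw [← sum_F_G a b τ e f he hf he' hf' (fun j => (Finset.univ.filter fun p : Fin n =>
          τ p = false ∧ e j < p).card)]
  · rw [statWeight, Finset.mul_sum]
    refine Finset.sum_congr rfl fun F _ => ?_
    rw [← cw_prod, pow_add, pow_add]
    ring
  · intro i c
    have : (Finset.univ.filter fun p : Fin n => τ p = false ∧ e i < p)
        = (Finset.univ.filter fun c => e i < f c).map ⟨f, hf.injective⟩ := by
      ext p
      simp only [Finset.mem_filter, Finset.mem_univ, true_and, Finset.mem_map,
        Function.Embedding.coeFn_mk, hf']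
      constructor
      · rintro ⟨⟨c, rfl⟩, h⟩
        exact ⟨c, h, rfl⟩
      · rintro ⟨c, h, rfl⟩
        exact ⟨⟨c, rfl⟩, h⟩
    rw [this, Finset.card_map, downset_card]
    · simp
    · intro c c' h h'
      simp only [Finset.mem_filter, Finset.mem_univ, true_and] at h ⊢
      exact h.trans (hf h')

lemma rate_eq {m : ℕ} (a b : ℝ) (σ τ : Fin (m+1) → Bool) :
    tasepRate (m+1) a b σ τ =
      (if σ 0 = false ∧ τ = Function.update σ 0 true then a else 0) +
      (if σ (Fin.last m) = true ∧ τ = Function.update σ (Fin.last m) false then b else 0) +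
      ∑ i : Fin m, (if σ i.castSucc = true ∧ σ i.succ = false ∧
        τ = Function.update (Function.update σ i.castSucc false) i.succ true then 1 else 0) := by
  have e3 : ∀ p : Prop, (∃ _ : 0 < m + 1, p) ↔ p := fun p => ⟨fun h => h.2, fun h => ⟨by omega, h⟩⟩
  rw [tasepRate]
  congr 1
  · congr 1
    · apply if_congr _ rfl rfl
      exact ⟨fun h => h.2, fun h => ⟨by omega, h⟩⟩
    · apply if_congr _ rfl rfl
      exact ⟨fun h => h.2, fun h => ⟨by omega, h⟩⟩
  · split_ifs with h
    · obtain ⟨i, hi, h1, h2, h3⟩ := h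
      obtain ⟨i, rfl⟩ : ∃ j : Fin m, i = j.castSucc := ⟨⟨i, by omega⟩, rfl⟩
      have hs : (⟨(i.castSucc : ℕ) + 1, hi⟩ : Fin (m+1)) = i.succ := rfl
      rw [hs] at h2 h3
      rw [Finset.sum_eq_single i]
      · rw [if_pos ⟨h1, h2, h3⟩]
      · intro j _ hj
        rw [if_neg]
        rintro ⟨k1, k2, k3⟩
        apply hj
        have q1 : τ j.castSucc = false := by
          rw [k3, Function.update_of_ne, Function.update_self]
          exact (Fin.castSucc_lt_succ).ne
        by_contra hne
        by_cases hx : j.castSucc = i.succ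
        · rw [hx, h2] at k1; simp at k1
        · rw [h3, Function.update_of_ne hx, Function.update_of_ne, k1] at q1
          · simp at q1
          · simpa using hne
      · simp
    · symm
      apply Finset.sum_eq_zero
      intro i _
      rw [if_neg]
      intro h'
      exact h ⟨i.castSucc, by simp, h'⟩

lemma rev1 {n : ℕ} (σ τ : Fin n → Bool) (i : Fin n) (x : Bool) :
    (τ i = x ∧ σ = Function.update τ i (!x)) ↔ (σ i = (!x) ∧ τ = Function.update σ i x) := by
  constructor
  · rintro ⟨rfl, rfl⟩; simp
  · rintro ⟨h, rfl⟩; simp [← h]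

lemma rev2 {n : ℕ} (σ τ : Fin n → Bool) (i j : Fin n) (hij : i ≠ j) :
    (τ i = true ∧ τ j = false ∧ σ = Function.update (Function.update τ i false) j true) ↔
    (σ i = false ∧ σ j = true ∧ τ = Function.update (Function.update σ i true) j false) := by
  constructor
  · rintro ⟨h1, h2, rfl⟩
    refine ⟨by simp [hij], by simp, ?_⟩
    funext x
    by_cases hx : x = i <;> by_cases hy : x = j <;> simp_all [Function.update_apply]
  · rintro ⟨h1, h2, rfl⟩
    refine ⟨by simp [hij], by simp, ?_⟩
    funext x
    by_cases hx : x = i <;> by_cases hy : x = j <;> simp_all [Function.update_apply]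

lemma sum_ind {n : ℕ} (σ ρ : Fin n → Bool) (p : Prop) [Decidable p]
    [∀ τ : Fin n → Bool, Decidable (p ∧ τ = ρ)] [∀ τ : Fin n → Bool, Decidable (τ ≠ σ)]
    (h : p → ρ ≠ σ) (x : ℝ)
    (f : (Fin n → Bool) → ℝ) :
    ∑ τ ∈ Finset.univ.filter (fun τ : Fin n → Bool => τ ≠ σ),
      (if p ∧ τ = ρ then x else 0) * f τ = if p then x * f ρ else 0 := by
  by_cases hp : p
  · rw [Finset.sum_eq_single ρ]
    · simp [hp]
    · intro τ _ hτ
      simp [hτ]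
    · intro hh
      simp [h hp] at hh
  · simp [hp]

def sg : Bool → ℝ
  | true => 1
  | false => -1

lemma swap_del {m : ℕ} (σ : Fin (m+1) → Bool) (i : Fin m) (x y : Bool)
    (h1 : σ i.castSucc = x) (h2 : σ i.succ = y) :
    (fun p => Function.update (Function.update σ i.castSucc y) i.succ x (i.castSucc.succAbove p))
    = fun p => σ (i.succ.succAbove p) := by
  funext p
  by_cases hp : p = i
  · subst hp
    rw [Fin.succAbove_castSucc_self, Fin.succAbove_succ_self, Function.update_self, h1]
  · rw [Function.update_of_ne, Function.update_of_ne]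
    · congr 1
      rcases lt_or_gt_of_ne hp with h | h
      · rw [Fin.succAbove_of_castSucc_lt _ _ (Fin.castSucc_lt_castSucc_iff.2 h),
          Fin.succAbove_of_castSucc_lt _ _ (by simp only [Fin.lt_def, Fin.val_castSucc, Fin.val_succ] at *; omega)]
      · rw [Fin.succAbove_of_le_castSucc _ _ (Fin.castSucc_le_castSucc_iff.2 h.le),
          Fin.succAbove_of_le_castSucc _ _ (by simp only [Fin.lt_def, Fin.le_def, Fin.val_castSucc, Fin.val_succ] at *; omega)]
    · exact Fin.succAbove_ne _ _
    · intro h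
      rw [← Fin.succAbove_castSucc_self] at h
      exact hp (Fin.succAbove_right_inj.1 h)

lemma swap_del' {m : ℕ} (σ : Fin (m+1) → Bool) (i : Fin m) (x y : Bool)
    (h1 : σ i.castSucc = x) (h2 : σ i.succ = y) :
    (fun p => Function.update (Function.update σ i.castSucc y) i.succ x (i.succ.succAbove p))
    = fun p => σ (i.castSucc.succAbove p) := by
  have hne : i.castSucc ≠ i.succ := (Fin.castSucc_lt_succ).ne
  have := swap_del (Function.update (Function.update σ i.castSucc y) i.succ x) i y x
    (by rw [Function.update_of_ne hne, Function.update_self]) (by rw [Function.update_self])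
  rw [← this]
  funext p
  generalize i.castSucc.succAbove p = q
  by_cases hx : q = i.succ
  · subst hx; simp [h2]
  · by_cases hy : q = i.castSucc
    · subst hy; simp [hne, h1]
    · simp [hx, hy]

lemma sum_ind' {n : ℕ} (σ ρ : Fin n → Bool) (p : Prop) [Decidable p]
    [∀ τ : Fin n → Bool, Decidable (p ∧ τ = ρ)] [∀ τ : Fin n → Bool, Decidable (τ ≠ σ)]
    (h : p → ρ ≠ σ) (x : ℝ) :
    ∑ τ ∈ Finset.univ.filter (fun τ : Fin n → Bool => τ ≠ σ),
      (if p ∧ τ = ρ then x else 0) = if p then x else 0 := by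
  have := sum_ind σ ρ p h x (fun _ => 1)
  simpa only [mul_one] using this

lemma bond {m : ℕ} (a b : ℝ) (σ : Fin (m+1) → Bool) (i : Fin m) :
    (if σ i.castSucc = false ∧ σ i.succ = true then
      1 * PW a b (Function.update (Function.update σ i.castSucc true) i.succ false) else 0)
    - PW a b σ * (if σ i.castSucc = true ∧ σ i.succ = false then 1 else 0)
    = sg (σ i.succ) * (a * b) * PW a b (fun p => σ (i.succ.succAbove p))
      - sg (σ i.castSucc) * (a * b) * PW a b (fun p => σ (i.castSucc.succAbove p)) := by
  have hne : i.castSucc ≠ i.succ := (Fin.castSucc_lt_succ).ne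
  rcases h1 : σ i.castSucc <;> rcases h2 : σ i.succ
  · have e := swap_del σ i false false h1 h2
    rw [← h1, Function.update_eq_self, h1, ← h2, Function.update_eq_self] at e
    simp [e]
  · rw [PW_mid a b (Function.update (Function.update σ i.castSucc true) i.succ false) i
      (by simp [hne]) (by simp), swap_del σ i _ _ h1 h2, swap_del' σ i _ _ h1 h2]
    simp [sg]; ring
  · rw [PW_mid a b σ i h1 h2]
    simp [sg]; ring
  · have e := swap_del σ i true true h1 h2
    rw [← h1, Function.update_eq_self, h1, ← h2, Function.update_eq_self] at e
    simp [e]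

lemma left_bd {m : ℕ} (a b : ℝ) (σ : Fin (m+1) → Bool) :
    (if σ 0 = true then a * PW a b (Function.update σ 0 false) else 0)
    - PW a b σ * (if σ 0 = false then a else 0)
    = sg (σ 0) * (a * b) * PW a b (fun p => σ ((0 : Fin (m+1)).succAbove p)) := by
  rcases h : σ 0
  · rw [PW_first a b σ h]; simp [sg]; ring
  · rw [PW_first a b _ (Function.update_self ..)]
    have : ∀ p, Function.update σ 0 false ((0 : Fin (m+1)).succAbove p) = σ ((0 : Fin (m+1)).succAbove p) :=
      fun p => Function.update_of_ne (Fin.succAbove_ne _ _) _ _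
    simp only [this]
    simp [sg]; ring

lemma right_bd {m : ℕ} (a b : ℝ) (σ : Fin (m+1) → Bool) :
    (if σ (Fin.last m) = false then b * PW a b (Function.update σ (Fin.last m) true) else 0)
    - PW a b σ * (if σ (Fin.last m) = true then b else 0)
    = - (sg (σ (Fin.last m)) * (a * b) * PW a b (fun p => σ ((Fin.last m).succAbove p))) := by
  rcases h : σ (Fin.last m)
  · rw [PW_last a b _ (Function.update_self ..)]
    have : ∀ p, Function.update σ (Fin.last m) true ((Fin.last m).succAbove p) = σ ((Fin.last m).succAbove p) :=
      fun p => Function.update_of_ne (Fin.succAbove_ne _ _) _ _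
    simp only [this]
    simp [sg]; ring
  · rw [PW_last a b σ h]; simp [sg]; ring

lemma inflow {m : ℕ} (a b : ℝ) (σ : Fin (m+1) → Bool) (f : (Fin (m+1) → Bool) → ℝ) :
    ∑ τ ∈ Finset.univ.filter (fun τ : Fin (m+1) → Bool => τ ≠ σ), tasepRate (m+1) a b τ σ * f τ
    = (if σ 0 = true then a * f (Function.update σ 0 false) else 0)
    + (if σ (Fin.last m) = false then b * f (Function.update σ (Fin.last m) true) else 0)
    + ∑ i : Fin m, (if σ i.castSucc = false ∧ σ i.succ = true then
      1 * f (Function.update (Function.update σ i.castSucc true) i.succ false) else 0) := by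
  have hne : ∀ i : Fin m, i.castSucc ≠ i.succ := fun i => (Fin.castSucc_lt_succ).ne
  have r0 := fun τ => rev1 σ τ 0 false
  have r1 := fun τ => rev1 σ τ (Fin.last m) true
  have r2 := fun τ i => rev2 σ τ _ _ (hne i)
  simp only [Bool.not_true, Bool.not_false] at r0 r1
  simp only [rate_eq, r0, r1, r2, add_mul, Finset.sum_mul, Finset.sum_add_distrib]
  rw [sum_ind, sum_ind, Finset.sum_comm]
  · congr 1
    refine Finset.sum_congr rfl fun i _ => ?_
    simp only [← and_assoc]
    rw [sum_ind]
    intro h h'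
    have := congrFun h' i.succ
    rw [h.2] at this
    simp at this
  · intro h h'
    have := congrFun h' (Fin.last m)
    rw [h] at this
    simp at this
  · intro h h'
    have := congrFun h' 0
    rw [h] at this
    simp at this

lemma outflow {m : ℕ} (a b : ℝ) (σ : Fin (m+1) → Bool) :
    ∑ τ ∈ Finset.univ.filter (fun τ : Fin (m+1) → Bool => τ ≠ σ), tasepRate (m+1) a b σ τ
    = (if σ 0 = false then a else 0)
    + (if σ (Fin.last m) = true then b else 0)
    + ∑ i : Fin m, (if σ i.castSucc = true ∧ σ i.succ = false then 1 else 0) := by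
  simp only [rate_eq, Finset.sum_add_distrib]
  rw [sum_ind', sum_ind', Finset.sum_comm]
  · congr 1
    refine Finset.sum_congr rfl fun i _ => ?_
    simp only [← and_assoc]
    rw [sum_ind']
    intro h h'
    have := congrFun h' i.succ
    rw [h.2] at this
    simp at this
  · intro h h'
    have := congrFun h' (Fin.last m)
    rw [h] at this
    simp at this
  · intro h h'
    have := congrFun h' 0
    rw [h] at this
    simp at this

/-- (Corteel–Williams, stationarity form) The tableaux-defined weights `P` form a
stationary measure for the open-boundary TASEP: for every state `σ`, the global
balance equation holds. -/
theorem stmt14 (n : ℕ) (hn : 1 ≤ n) (a b : ℝ) (ha : 0 < a) (hb : 0 < b)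
    (σ : Fin n → Bool) :
    ∑ τ ∈ Finset.univ.filter (fun τ : Fin n → Bool => τ ≠ σ),
        tasepRate n a b τ σ * statWeight n a b τ
      = statWeight n a b σ *
        ∑ τ' ∈ Finset.univ.filter (fun τ' : Fin n → Bool => τ' ≠ σ),
          tasepRate n a b σ τ' := by
  obtain ⟨m, rfl⟩ : ∃ m, n = m + 1 := ⟨n - 1, by omega⟩
  simp only [statWeight_eq]
  rw [inflow, outflow, ← sub_eq_zero]
  have hb := Finset.sum_congr rfl (fun i (_ : i ∈ (Finset.univ : Finset (Fin m))) => bond a b σ i)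
  rw [Finset.sum_sub_distrib, Finset.sum_sub_distrib, ← Finset.mul_sum] at hb
  have hl := left_bd a b σ
  have hr := right_bd a b σ
  have t1 := Fin.sum_univ_succ
    (fun i : Fin (m+1) => sg (σ i) * (a * b) * PW a b (fun p => σ (i.succAbove p)))
  have t2 := Fin.sum_univ_castSucc
    (fun i : Fin (m+1) => sg (σ i) * (a * b) * PW a b (fun p => σ (i.succAbove p)))
  rw [mul_add, mul_add]
  linarith
end
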